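/- arXiv:1207.5222 — 5 statements merged into one kernel-verified Lean document; each statement's English description precedes it below -/
import Mathlib

section
/- Let −∞ < a < b ≤ +∞, α > 0 real, β ∈ ℂ with Re β > 0, f : [a,b) → ℝ, g : (a,b) → ℂ, and let (a_k)_{k≥0} be real numbers with a_0 > 0 and (b_k)_{k≥0} complex numbers with b_0 ≠ 0. Assume: (i) f(x) > f(a) for all x ∈ (a,b), and for every δ > 0 the infimum of f(x) − f(a) over [a+δ, b) is positive; (ii) there is ε > 0 such that f is differentiable on (a, a+ε) and f′ and g are continuous on (a, a+ε); (iii) for every N ≥ 0, as x → a⁺, f(x) − f(a) = Σ_{k=0}^{N−1} a_k (x−a)^{k+α} + O((x−a)^{N+α}), f′(x) = Σ_{k=0}^{N−1} a_k (k+α)(x−a)^{k+α−1} + O((x−a)^{N+α−1}), and g(x) = Σ_{k=0}^{N−1} b_k (x−a)^{k+β−1} + O((x−a)^{N+Re β−1}); (iv) the integral ∫_a^b e^{−λ f(x)} g(x) dx converges absolutely for all sufficiently large λ. Then for every N ≥ 0, as λ → +∞ through real values, ∫_a^b e^{−λ f(x)} g(x) dx = e^{−λ f(a)} ( Σ_{n=0}^{N−1}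 Γ((n+β)/α) c_n λ^{−(n+β)/α} + O(λ^{−(N+Re β)/α}) ), where c_n = (1/(α Γ((n+β)/α))) Σ_{k=0}^n b_{n−k} Σ_{j=0}^k ((−1)^j / (a_0^{(n+β)/α + j} j!)) Γ((n+β)/α + j) B_{k,j}(a_1,…,a_{k−j+1}). -/
open Finset MeasureTheory Real Asymptotics Filter Topology

/-- Partial ordinary Bell polynomials: `obell f n k` is the coefficient of `x^n` in
`(∑_{m ≥ 1} f m * x^m)^k`, i.e. `B_{n,k}(f₁, …, f_{n-k+1})`. -/
noncomputable def obell (f : ℕ → ℂ) (n k : ℕ) : ℂ :=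
  PowerSeries.coeff n ((PowerSeries.mk fun m => if m = 0 then 0 else f m) ^ k)

/-- Coefficient of `t^k` in the expansion of `exp (-u * (A 1 * t + A 2 * t^2 + ...))`. -/
noncomputable def lapQ (A : ℕ → ℂ) (k : ℕ) (u : ℝ) : ℂ :=
  ∑ j ∈ Finset.range (k + 1), (-1 : ℂ) ^ j / (Nat.factorial j : ℂ) * (u : ℂ) ^ j * obell A k j

/-- The two-parameter filter: `t → 0+`, `u ≥ 0` arbitrary. -/
def lapL : Filter (ℝ × ℝ) := (𝓝[>] (0:ℝ)) ×ˢ 𝓟 (Set.Ici (0:ℝ))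

lemma lapL_fst : Tendsto (fun p : ℝ × ℝ => p.1) lapL (𝓝[>] (0:ℝ)) := tendsto_fst

lemma lapL_snd : ∀ᶠ p in lapL, 0 ≤ p.2 := by
  have : Tendsto (fun p : ℝ × ℝ => p.2) lapL (𝓟 (Set.Ici (0:ℝ))) := tendsto_snd
  exact this (mem_principal_self _)

lemma lapL_pos : ∀ᶠ p in lapL, 0 < p.1 :=
  lapL_fst.eventually self_mem_nhdsWithin

lemma lapL_lt {d : ℝ} (hd : 0 < d) : ∀ᶠ p in lapL, p.1 < d :=
  lapL_fst.eventually (mem_nhdsWithin_of_mem_nhds (Iio_mem_nhds hd))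

lemma lap_pow_le_exp (c : ℝ) (hc : 0 < c) (j : ℕ) :
    ∃ C : ℝ, 0 ≤ C ∧ ∀ u : ℝ, 0 ≤ u → u ^ j ≤ C * Real.exp (c * u) := by
  refine ⟨j.factorial / c ^ j, by positivity, fun u hu => ?_⟩
  have h := Real.pow_div_factorial_le_exp (c * u) (by positivity) j
  rw [mul_pow, div_le_iff₀ (by positivity)] at h
  rw [div_mul_eq_mul_div, le_div_iff₀ (by positivity)]
  linarith

lemma lap_bigO_pow_exp (c : ℝ) (hc : 0 < c) (j : ℕ) :
    (fun p : ℝ × ℝ => (p.2 : ℂ) ^ j) =O[lapL] fun p => Real.exp (c * p.2) := by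
  obtain ⟨C, hC, h⟩ := lap_pow_le_exp c hc j
  refine IsBigO.of_bound C ?_
  filter_upwards [lapL_snd] with p hp
  rw [norm_pow, Complex.norm_real, Real.norm_of_nonneg hp, Real.norm_of_nonneg (by positivity)]
  exact h _ hp

lemma lap_bigO_Q (A : ℕ → ℂ) (k : ℕ) (c : ℝ) (hc : 0 < c) :
    (fun p : ℝ × ℝ => lapQ A k p.2) =O[lapL] fun p => Real.exp (c * p.2) := by
  unfold lapQ
  refine IsBigO.fun_sum fun j _ => ?_
  have := ((lap_bigO_pow_exp c hc j).const_mul_left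
    ((-1 : ℂ) ^ j / (Nat.factorial j : ℂ))).mul (isBigO_const_const (obell A k j) one_ne_zero lapL)
  simpa using this

lemma lap_Q_le (A : ℕ → ℂ) (k : ℕ) (c : ℝ) (hc : 0 < c) :
    ∃ C : ℝ, 0 ≤ C ∧ ∀ u : ℝ, 0 ≤ u → ‖lapQ A k u‖ ≤ C * Real.exp (c * u) := by
  choose C hC h using lap_pow_le_exp c hc
  refine ⟨∑ j ∈ Finset.range (k + 1), ‖(-1 : ℂ) ^ j / (Nat.factorial j : ℂ)‖ * C j * ‖obell A k j‖,
    Finset.sum_nonneg fun j _ => by have := hC j; positivity, fun u hu => ?_⟩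
  unfold lapQ
  refine (norm_sum_le _ _).trans ?_
  rw [Finset.sum_mul]
  refine Finset.sum_le_sum fun j _ => ?_
  rw [norm_mul, norm_mul, norm_pow (u : ℂ), Complex.norm_real, Real.norm_of_nonneg hu]
  have := h j u hu
  calc _ ≤ ‖(-1 : ℂ) ^ j / (Nat.factorial j : ℂ)‖ * (C j * Real.exp (c * u)) * ‖obell A k j‖ := by
        gcongr
    _ = _ := by ring

lemma lap_poly_trunc (p : Polynomial ℂ) (N : ℕ) :
    (fun t : ℝ => p.eval (t : ℂ) - ∑ k ∈ Finset.range N, p.coeff k * (t : ℂ) ^ k)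
      =O[𝓝[>] (0:ℝ)] fun t : ℝ => t ^ N := by
  have h : ∀ t : ℝ, p.eval (t : ℂ) - ∑ k ∈ Finset.range N, p.coeff k * (t : ℂ) ^ k =
      ∑ i ∈ Finset.range (p.natDegree + 1), p.coeff (N + i) * (t : ℂ) ^ (N + i) := by
    intro t
    rw [Polynomial.eval_eq_sum_range' (n := N + (p.natDegree + 1)) (by omega),
      Finset.sum_range_add]
    ring
  simp_rw [h]
  refine IsBigO.fun_sum fun i _ => ?_
  refine IsBigO.const_mul_left ?_ _
  refine IsBigO.of_bound 1 ?_
  have h1 : ∀ᶠ t : ℝ in 𝓝[>] (0:ℝ), t < 1 := mem_nhdsWithin_of_mem_nhds (Iio_mem_nhds one_pos)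
  filter_upwards [h1, self_mem_nhdsWithin] with t ht ht0
  have ht0 : 0 < t := ht0
  rw [norm_pow, norm_pow, Complex.norm_real, pow_add, one_mul]
  rw [Real.norm_of_nonneg ht0.le]
  exact mul_le_of_le_one_right (by positivity) (pow_le_one₀ ht0.le ht.le)

lemma obell_eq_zero (A : ℕ → ℂ) {k j : ℕ} (h : k < j) : obell A k j = 0 := by
  unfold obell
  apply PowerSeries.coeff_of_lt_order
  have h1 : (1 : ℕ∞) ≤ (PowerSeries.mk fun m => if m = 0 then (0:ℂ) else A m).order := by
    rw [PowerSeries.one_le_order_iff_constCoeff_eq_zero]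
    simp [← PowerSeries.coeff_zero_eq_constantCoeff_apply]
  calc (k : ℕ∞) < j := by exact_mod_cast h
    _ = j • (1 : ℕ∞) := by simp
    _ ≤ j • _ := nsmul_le_nsmul_right h1 j
    _ ≤ _ := PowerSeries.le_order_pow _ _

lemma lap_exp_sub_exp (z w : ℂ) : ‖Complex.exp z - Complex.exp w‖ ≤
    ‖z - w‖ * Real.exp (‖z - w‖ + ‖w‖) := by
  have h : Complex.exp z - Complex.exp w = (Complex.exp (z - w) - 1) * Complex.exp w := by
    rw [sub_mul, ← Complex.exp_add]; simp
  have h1 := Complex.norm_exp_sub_sum_le_norm_mul_exp (z - w) 1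
  simp at h1
  rw [h, norm_mul, Real.exp_add, ← mul_assoc]
  gcongr
  exact Complex.norm_exp_le_exp_norm w

lemma lap_exp_expand (A : ℕ → ℂ) (R : ℝ → ℂ) (c : ℝ) (hc : 0 < c) (N : ℕ)
    (hR : (fun t : ℝ => R t - ∑ k ∈ Finset.range N, A (k + 1) * (t : ℂ) ^ (k + 1))
      =O[𝓝[>] (0:ℝ)] fun t : ℝ => t ^ (N + 1)) :
    (fun p : ℝ × ℝ => Complex.exp (-(p.2 * R p.1)) -
      ∑ k ∈ Finset.range N, lapQ A k p.2 * (p.1 : ℂ) ^ k)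
      =O[lapL] fun p => p.1 ^ N * Real.exp (c * p.2) := by
  set φ : PowerSeries ℂ := PowerSeries.mk fun m => if m = 0 then 0 else A m with hφ
  set P : Polynomial ℂ := PowerSeries.trunc (N + 1) φ with hP
  have hPe : ∀ t : ℝ, P.eval (t : ℂ) = ∑ k ∈ Finset.range N, A (k + 1) * (t : ℂ) ^ (k + 1) := by
    intro t
    rw [hP, ← Polynomial.eval₂_id, PowerSeries.eval₂_trunc_eq_sum_range, Finset.sum_range_succ']
    simp [hφ]
  have hP1 : (fun t : ℝ => P.eval (t : ℂ)) =O[𝓝[>] (0:ℝ)] fun t : ℝ => t := by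
    have := lap_poly_trunc P 1
    simpa [hP, PowerSeries.coeff_trunc, hφ] using this
  have hRP : (fun t : ℝ => R t - P.eval (t : ℂ)) =O[𝓝[>] (0:ℝ)] fun t : ℝ => t ^ (N + 1) := by
    simpa only [hPe] using hR
  -- smallness
  have hid : Tendsto (fun t : ℝ => t) (𝓝[>] (0:ℝ)) (𝓝 0) := tendsto_nhdsWithin_of_tendsto_nhds tendsto_id
  have hP0 : Tendsto (fun t : ℝ => P.eval (t : ℂ)) (𝓝[>] (0:ℝ)) (𝓝 0) := hP1.trans_tendsto hid
  have hRP0 : Tendsto (fun t : ℝ => R t - P.eval (t : ℂ)) (𝓝[>] (0:ℝ)) (𝓝 0) :=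
    hRP.trans_tendsto (by simpa using hid.pow (N + 1))
  have hPs : ∀ᶠ p in lapL, ‖P.eval (p.1 : ℂ)‖ < c / 4 :=
    (lapL_fst.eventually (hP0.norm.eventually (gt_mem_nhds (by simpa using (by positivity : 0 < c/4)))))
  have hRPs : ∀ᶠ p in lapL, ‖R p.1 - P.eval (p.1 : ℂ)‖ < c / 4 :=
    (lapL_fst.eventually (hRP0.norm.eventually (gt_mem_nhds (by simpa using (by positivity : 0 < c/4)))))
  have hRPN : (fun p : ℝ × ℝ => R p.1 - P.eval (p.1 : ℂ)) =O[lapL] fun p => p.1 ^ N := by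
    refine (hRP.comp_tendsto lapL_fst).trans ?_
    refine IsBigO.of_bound 1 ?_
    filter_upwards [lapL_pos, lapL_lt one_pos] with p h0 h1
    simp only [Function.comp, norm_pow, Real.norm_of_nonneg h0.le, one_mul]
    exact pow_le_pow_of_le_one h0.le h1.le (by omega)
  have hexp2 : (fun p : ℝ × ℝ => Real.exp (c/2 * p.2) * Real.exp (c/2 * p.2)) =
      fun p => Real.exp (c * p.2) := by
    ext p; rw [← Real.exp_add]; ring_nf
  -- step 1
  have s1 : (fun p : ℝ × ℝ => Complex.exp (-(p.2 * R p.1)) - Complex.exp (-(p.2 * P.eval (p.1 : ℂ))))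
      =O[lapL] fun p => p.1 ^ N * Real.exp (c * p.2) := by
    have h1 : (fun p : ℝ × ℝ => Complex.exp (-(p.2 * R p.1)) - Complex.exp (-(p.2 * P.eval (p.1 : ℂ))))
      =O[lapL] fun p => (R p.1 - P.eval (p.1 : ℂ)) * ((p.2 : ℂ) ^ 1 * (Real.exp (c/2 * p.2) : ℝ)) := by
      refine IsBigO.of_bound 1 ?_
      filter_upwards [lapL_snd, hPs, hRPs] with p h0 h1 h2
      refine (lap_exp_sub_exp _ _).trans ?_
      have e : (-(p.2 * R p.1) - -(p.2 * P.eval (p.1 : ℂ)) : ℂ) = -(p.2 * (R p.1 - P.eval (p.1:ℂ))) := by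
        ring
      rw [e, norm_neg, norm_neg, norm_mul, norm_mul, norm_mul, norm_mul, norm_pow, Complex.norm_real,
        Real.norm_of_nonneg h0, Complex.norm_real, Real.norm_of_nonneg (Real.exp_pos _).le]
      have : Real.exp (p.2 * ‖R p.1 - P.eval (p.1 : ℂ)‖ + p.2 * ‖P.eval (p.1 : ℂ)‖) ≤
          Real.exp (c/2 * p.2) := by
        apply Real.exp_le_exp.2; nlinarith
      calc _ ≤ p.2 * ‖R p.1 - P.eval (p.1 : ℂ)‖ * Real.exp (c/2 * p.2) := by gcongr
        _ = _ := by ring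
    refine h1.trans ?_
    refine hRPN.mul ?_
    rw [← hexp2]
    refine (lap_bigO_pow_exp (c/2) (by positivity) 1).mul ?_
    exact IsBigO.of_bound 1 (Eventually.of_forall fun p => by
      rw [Complex.norm_real, one_mul])
  -- step 2
  have s2 : (fun p : ℝ × ℝ => Complex.exp (-(p.2 * P.eval (p.1 : ℂ))) -
      ∑ j ∈ Finset.range N, (-(p.2 * P.eval (p.1 : ℂ))) ^ j / (Nat.factorial j : ℂ))
      =O[lapL] fun p => p.1 ^ N * Real.exp (c * p.2) := by
    have h1 : (fun p : ℝ × ℝ => Complex.exp (-(p.2 * P.eval (p.1 : ℂ))) -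
      ∑ j ∈ Finset.range N, (-(p.2 * P.eval (p.1 : ℂ))) ^ j / (Nat.factorial j : ℂ))
      =O[lapL] fun p => (P.eval (p.1 : ℂ)) ^ N * ((p.2 : ℂ) ^ N * (Real.exp (c/2 * p.2) : ℝ)) := by
      refine IsBigO.of_bound 1 ?_
      filter_upwards [lapL_snd, hPs] with p h0 h1
      refine (Complex.norm_exp_sub_sum_le_norm_mul_exp _ N).trans ?_
      rw [norm_neg, norm_mul, norm_mul, norm_mul, norm_pow, norm_pow, Complex.norm_real,
        Real.norm_of_nonneg h0, Complex.norm_real, Real.norm_of_nonneg (Real.exp_pos _).le]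
      have : Real.exp (p.2 * ‖P.eval (p.1 : ℂ)‖) ≤ Real.exp (c/2 * p.2) := by
        apply Real.exp_le_exp.2; nlinarith
      calc _ ≤ (p.2 * ‖P.eval (p.1 : ℂ)‖) ^ N * Real.exp (c/2 * p.2) := by gcongr
        _ = _ := by ring
    refine h1.trans ?_
    refine ((hP1.comp_tendsto lapL_fst).pow N).mul ?_
    rw [← hexp2]
    refine (lap_bigO_pow_exp (c/2) (by positivity) N).mul ?_
    exact IsBigO.of_bound 1 (Eventually.of_forall fun p => by
      rw [Complex.norm_real, one_mul])
  -- step 3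
  have s3 : (fun p : ℝ × ℝ => 
      ∑ j ∈ Finset.range N, (-(p.2 * P.eval (p.1 : ℂ))) ^ j / (Nat.factorial j : ℂ) -
      ∑ k ∈ Finset.range N, lapQ A k p.2 * (p.1 : ℂ) ^ k)
      =O[lapL] fun p => p.1 ^ N * Real.exp (c * p.2) := by
    have h1 : ∀ p : ℝ × ℝ, ∑ j ∈ Finset.range N, (-(p.2 * P.eval (p.1 : ℂ))) ^ j / (Nat.factorial j : ℂ) -
      ∑ k ∈ Finset.range N, lapQ A k p.2 * (p.1 : ℂ) ^ k =
      ∑ j ∈ Finset.range N, ((P ^ j).eval (p.1 : ℂ) - ∑ k ∈ Finset.range N, (P ^ j).coeff k * (p.1 : ℂ) ^ k)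
        * ((-1 : ℂ) ^ j / (Nat.factorial j : ℂ) * (p.2 : ℂ) ^ j) := by
      intro p
      have h2 : ∀ k ∈ Finset.range N, lapQ A k p.2 = ∑ j ∈ Finset.range N,
          (-1 : ℂ) ^ j / (Nat.factorial j : ℂ) * (p.2 : ℂ) ^ j * (P ^ j).coeff k := by
        intro k hk
        have hk' := Finset.mem_range.1 hk
        have h3 : ∀ j, (P ^ j).coeff k = obell A k j := by
          intro j
          have := congrArg (fun q => Polynomial.coeff q k) (PowerSeries.trunc_trunc_pow φ (N + 1) j)
          simp only [PowerSeries.coeff_trunc] at this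
          rw [if_pos (by omega), if_pos (by omega)] at this
          rw [← Polynomial.coeff_coe, Polynomial.coe_pow]
          exact this
        unfold lapQ
        simp_rw [h3]
        refine Finset.sum_subset (Finset.range_mono (by omega)) fun j _ hj => ?_
        rw [obell_eq_zero A (by simpa using hj), mul_zero]
      rw [Finset.sum_congr (s₁ := Finset.range N) rfl (fun k hk =>
        congrArg (fun z => z * (p.1 : ℂ) ^ k) (h2 k hk))]
      simp_rw [Finset.sum_mul]
      rw [Finset.sum_comm, ← Finset.sum_sub_distrib]
      refine Finset.sum_congr rfl fun j _ => ?_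
      rw [sub_mul, Finset.sum_mul, Polynomial.eval_pow]
      congr 1
      · rw [neg_pow, mul_pow]; ring
      · exact Finset.sum_congr rfl fun k _ => by ring
    simp_rw [h1]
    refine IsBigO.fun_sum fun j _ => ?_
    refine ((lap_poly_trunc (P ^ j) N).comp_tendsto lapL_fst).mul ?_
    exact (lap_bigO_pow_exp c hc j).const_mul_left _
  refine ((s1.add s2).add s3).congr_left fun p => ?_
  ring

lemma lap_prod_expand (A B : ℕ → ℂ) (R H : ℝ → ℂ) (c : ℝ) (hc : 0 < c)
    (hR : ∀ N : ℕ, (fun t : ℝ => R t - ∑ k ∈ Finset.range N, A (k + 1) * (t : ℂ) ^ (k + 1))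
      =O[𝓝[>] (0:ℝ)] fun t : ℝ => t ^ (N + 1))
    (hH : ∀ N : ℕ, (fun t : ℝ => H t - ∑ k ∈ Finset.range N, B k * (t : ℂ) ^ k)
      =O[𝓝[>] (0:ℝ)] fun t : ℝ => t ^ N) (N : ℕ) :
    (fun p : ℝ × ℝ => Complex.exp (-(p.2 * R p.1)) * H p.1 -
      ∑ n ∈ Finset.range N, (p.1 : ℂ) ^ n * ∑ k ∈ Finset.range (n + 1), B (n - k) * lapQ A k p.2)
      =O[lapL] fun p => p.1 ^ N * Real.exp (c * p.2) := by
  have e : ∀ p : ℝ × ℝ, Complex.exp (-(p.2 * R p.1)) * H p.1 -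
      ∑ n ∈ Finset.range N, (p.1 : ℂ) ^ n * ∑ k ∈ Finset.range (n + 1), B (n - k) * lapQ A k p.2 =
      (Complex.exp (-(p.2 * R p.1)) - ∑ k ∈ Finset.range N, lapQ A k p.2 * (p.1 : ℂ) ^ k) * H p.1 +
      ∑ k ∈ Finset.range N, lapQ A k p.2 * ((p.1 : ℂ) ^ k *
        (H p.1 - ∑ i ∈ Finset.range (N - k), B i * (p.1 : ℂ) ^ i)) := by
    intro p
    have h1 : ∑ n ∈ Finset.range N, (p.1 : ℂ) ^ n * ∑ k ∈ Finset.range (n + 1), B (n - k) * lapQ A k p.2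
        = ∑ k ∈ Finset.range N, ∑ i ∈ Finset.range (N - k),
            lapQ A k p.2 * (p.1 : ℂ) ^ k * (B i * (p.1 : ℂ) ^ i) := by
      rw [← Finset.sum_range_diag_flip N
        (fun k i => lapQ A k p.2 * (p.1 : ℂ) ^ k * (B i * (p.1 : ℂ) ^ i))]
      refine Finset.sum_congr rfl fun n _ => ?_
      rw [Finset.mul_sum]
      refine Finset.sum_congr rfl fun k hk => ?_
      have : n = k + (n - k) := by have := Finset.mem_range.1 hk; omega
      conv_lhs => rw [this, pow_add]
      rw [← this]
      ring
    rw [h1]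
    simp_rw [mul_sub, Finset.mul_sum, Finset.sum_sub_distrib, sub_mul, Finset.sum_mul]
    simp_rw [← mul_assoc]
    ring
  simp_rw [e]
  refine IsBigO.add ?_ (IsBigO.fun_sum fun k hk => ?_)
  · have h0 : (fun p : ℝ × ℝ => H p.1) =O[lapL] fun _ => (1:ℝ) := by
      exact ((hH 0).comp_tendsto lapL_fst).congr (fun p => by simp) (fun p => by simp)
    simpa using (lap_exp_expand A R c hc N (hR N)).mul h0
  · have hk' := Finset.mem_range.1 hk
    have h1 : (fun p : ℝ × ℝ => (p.1 : ℂ) ^ k) =O[lapL] fun p => p.1 ^ k :=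
      IsBigO.of_bound 1 (by simp)
    have h2 := (lap_bigO_Q A k c hc).mul (h1.mul ((hH (N - k)).comp_tendsto lapL_fst))
    refine h2.congr_right fun p => ?_
    simp only [Function.comp]
    rw [← pow_add, mul_comm]
    congr 2; omega

lemma lap_term (α : ℝ) (hα : 0 < α) (s : ℂ) (hs : 0 < s.re) (r : ℝ) (hr : 0 < r) :
    IntegrableOn (fun t : ℝ => (t : ℂ) ^ (s - 1) * Complex.exp (-((r * t ^ α : ℝ) : ℂ))) (Set.Ioi 0) ∧
    ∫ t in Set.Ioi (0:ℝ), (t : ℂ) ^ (s - 1) * Complex.exp (-((r * t ^ α : ℝ) : ℂ)) =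
      1 / (α : ℂ) * Complex.Gamma (s / α) * (r : ℂ) ^ (-(s / α)) := by
  constructor
  · have h1 := integrableOn_rpow_mul_exp_neg_mul_rpow (p := α) (s := s.re - 1) (b := r)
      (by linarith) hα hr
    refine Integrable.mono h1 ?_ ?_
    · refine ContinuousOn.aestronglyMeasurable ?_ measurableSet_Ioi
      refine ContinuousOn.mul ?_ ?_
      · intro t ht
        exact (Complex.continuousAt_ofReal_cpow_const t (s - 1) (Or.inr (ne_of_gt ht))).continuousWithinAt
      · refine Complex.continuous_exp.comp_continuousOn ?_
        refine ContinuousOn.neg (Complex.continuous_ofReal.comp_continuousOn ?_)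
        exact continuousOn_const.mul (Real.continuous_rpow_const hα.le).continuousOn
    · refine (ae_restrict_mem measurableSet_Ioi).mono fun t ht => ?_
      have ht : 0 < t := ht
      rw [norm_mul, Complex.norm_cpow_eq_rpow_re_of_pos ht, ← Complex.ofReal_neg,
        ← Complex.ofReal_exp, Complex.norm_real, norm_mul, Real.norm_of_nonneg (by positivity : 0 ≤ t ^ (s.re - 1))]
      simp
  · have hα' : (α : ℂ) ≠ 0 := by exact_mod_cast hα.ne'
    have h := integral_comp_rpow_Ioi_of_pos (p := α) hα
      (g := fun y : ℝ => (y : ℂ) ^ (s / α - 1) * Complex.exp (-(r * y)))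
    rw [Complex.integral_cpow_mul_exp_neg_mul_Ioi (by rw [Complex.div_ofReal_re]; positivity) hr] at h
    have e : ∫ t in Set.Ioi (0:ℝ), (α * t ^ (α - 1)) • (((t ^ α : ℝ) : ℂ) ^ (s / α - 1) * Complex.exp (-(r * (t ^ α : ℝ)))) =
        α * ∫ t in Set.Ioi (0:ℝ), (t : ℂ) ^ (s - 1) * Complex.exp (-((r * t ^ α : ℝ) : ℂ)) := by
      rw [← integral_const_mul]
      refine setIntegral_congr_fun measurableSet_Ioi fun t ht => ?_
      have ht : 0 < t := ht
      have ht' : (t : ℂ) ≠ 0 := by exact_mod_cast ht.ne'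
      have h2 : (t : ℂ) ^ (s - 1) = (t : ℂ) ^ ((α : ℂ) - 1) * ((t : ℂ) ^ (α : ℂ)) ^ (s / α - 1) := by
        have h5 : (t : ℂ) ^ (s - α) = ((t : ℂ) ^ (α : ℂ)) ^ (s / α - 1) := by
          rw [show s - α = α * (s / α - 1) by field_simp, Complex.cpow_mul_ofReal_nonneg ht.le]
          rw [Complex.ofReal_cpow ht.le]
        rw [← h5, ← Complex.cpow_add _ _ ht']
        congr 1; ring
      simp only [Complex.real_smul]
      rw [h2]
      push_cast
      rw [Complex.ofReal_cpow ht.le, Complex.ofReal_cpow ht.le]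
      push_cast
      ring
    rw [e] at h
    have h3 : (1 / (r : ℂ)) ^ (s / α) = (r : ℂ) ^ (-(s / α)) := by
      rw [one_div, Complex.inv_cpow _ _ (by rw [Complex.arg_ofReal_of_nonneg hr.le]; exact Real.pi_pos.ne),
        Complex.cpow_neg]
    rw [h3] at h
    field_simp
    rw [mul_comm, h]; ring

lemma lap_term2 (α : ℝ) (hα : 0 < α) (s : ℂ) (hs : 0 < s.re) (a₀ : ℝ) (ha : 0 < a₀) (l : ℝ)
    (hl : 0 < l) (j : ℕ) :
    IntegrableOn (fun t : ℝ => ((l * t ^ α : ℝ) : ℂ) ^ j * (t : ℂ) ^ (s - 1) *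
      Complex.exp (-((a₀ * (l * t ^ α) : ℝ) : ℂ))) (Set.Ioi 0) ∧
    ∫ t in Set.Ioi (0:ℝ), ((l * t ^ α : ℝ) : ℂ) ^ j * (t : ℂ) ^ (s - 1) *
      Complex.exp (-((a₀ * (l * t ^ α) : ℝ) : ℂ)) =
      1 / (α : ℂ) * Complex.Gamma (s / α + j) / (a₀ : ℂ) ^ (s / α + j) * (l : ℂ) ^ (-(s / α)) := by
  have hα' : (α : ℂ) ≠ 0 := by exact_mod_cast hα.ne'
  have hl' : (l : ℂ) ≠ 0 := by exact_mod_cast hl.ne'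
  have ha' : (a₀ : ℂ) ≠ 0 := by exact_mod_cast ha.ne'
  have hs' : 0 < (s + α * j).re := by
    have : (s + α * j).re = s.re + α * j := by simp
    rw [this]; positivity
  obtain ⟨h1, h2⟩ := lap_term α hα (s + α * j) hs' (a₀ * l) (by positivity)
  have e : Set.EqOn (fun t : ℝ => ((l * t ^ α : ℝ) : ℂ) ^ j * (t : ℂ) ^ (s - 1) *
      Complex.exp (-((a₀ * (l * t ^ α) : ℝ) : ℂ))) (fun t : ℝ => (l : ℂ) ^ j * ((t : ℂ) ^ (s + α * j - 1) * Complex.exp (-((a₀ * l * t ^ α : ℝ) : ℂ)))) (Set.Ioi 0) := by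
    intro t ht
    have ht : 0 < t := ht
    have ht' : (t : ℂ) ≠ 0 := by exact_mod_cast ht.ne'
    have : (t : ℂ) ^ (s + α * j - 1) = (t : ℂ) ^ (s - 1) * ((t ^ α : ℝ) : ℂ) ^ j := by
      rw [show s + α * j - 1 = (s - 1) + α * j by ring, Complex.cpow_add _ _ ht',
        Complex.cpow_mul_nat, Complex.ofReal_cpow ht.le]
    simp only
    rw [this, mul_assoc a₀ l]
    push_cast
    ring
  constructor
  · exact IntegrableOn.congr_fun (h1.const_mul _) e.symm measurableSet_Ioi
  · rw [setIntegral_congr_fun measurableSet_Ioi e, integral_const_mul, h2]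
    have h3 : (s + α * j) / α = s / α + j := by field_simp
    rw [h3]
    push_cast
    rw [Complex.mul_cpow_ofReal_nonneg ha.le hl.le, neg_add, Complex.cpow_add _ _ hl',
      Complex.cpow_neg (l : ℂ) (j : ℂ), Complex.cpow_natCast, ← neg_add, Complex.cpow_neg (a₀ : ℂ)]
    field_simp

/-- The main term of the integrand. -/
noncomputable def lapM (α : ℝ) (β : ℂ) (A B : ℕ → ℂ) (a₀ : ℝ) (N : ℕ) (l t : ℝ) : ℂ :=
  (∑ n ∈ Finset.range N, (t : ℂ) ^ n * ∑ k ∈ Finset.range (n + 1), B (n - k) * lapQ A k (l * t ^ α)) *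
    (t : ℂ) ^ (β - 1) * Complex.exp (-((a₀ * (l * t ^ α) : ℝ) : ℂ))

lemma lapM_integral (α : ℝ) (hα : 0 < α) (β : ℂ) (hβ : 0 < β.re) (A B : ℕ → ℂ) (a₀ : ℝ) (ha : 0 < a₀)
    (N : ℕ) (l : ℝ) (hl : 0 < l) :
    IntegrableOn (lapM α β A B a₀ N l) (Set.Ioi 0) ∧
    ∫ t in Set.Ioi (0:ℝ), lapM α β A B a₀ N l t =
      ∑ n ∈ Finset.range N, (∑ k ∈ Finset.range (n + 1), B (n - k) *
          ∑ j ∈ Finset.range (k + 1), ((-1 : ℂ) ^ j /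
            (((a₀ : ℂ) ^ (((n + β) / (α : ℂ)) + (j : ℂ))) * (Nat.factorial j : ℂ))) *
              Complex.Gamma (((n + β) / (α : ℂ)) + (j : ℂ)) * obell A k j) / α *
          (l : ℂ) ^ (-((n + β) / (α : ℂ))) := by
  have hs : ∀ n : ℕ, 0 < ((n : ℂ) + β).re := fun n => by
    simp; positivity
  have e : Set.EqOn (lapM α β A B a₀ N l) (fun t => ∑ n ∈ Finset.range N, ∑ k ∈ Finset.range (n + 1),
      ∑ j ∈ Finset.range (k + 1), (B (n - k) * ((-1 : ℂ) ^ j / (Nat.factorial j : ℂ)) * obell A k j) *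
        (((l * t ^ α : ℝ) : ℂ) ^ j * (t : ℂ) ^ ((n : ℂ) + β - 1) *
      Complex.exp (-((a₀ * (l * t ^ α) : ℝ) : ℂ)))) (Set.Ioi 0) := by
    intro t ht
    have ht : 0 < t := ht
    have ht' : (t : ℂ) ≠ 0 := by exact_mod_cast ht.ne'
    unfold lapM lapQ
    simp only [Finset.mul_sum, Finset.sum_mul]
    refine Finset.sum_congr rfl fun n _ => Finset.sum_congr rfl fun k _ =>
      Finset.sum_congr rfl fun j _ => ?_
    rw [add_sub_assoc, Complex.cpow_add _ _ ht', Complex.cpow_natCast]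
    ring
  have hi : ∀ (n j : ℕ) (c : ℂ), IntegrableOn (fun t : ℝ => c * (((l * t ^ α : ℝ) : ℂ) ^ j * (t : ℂ) ^ ((n : ℂ) + β - 1) *
      Complex.exp (-((a₀ * (l * t ^ α) : ℝ) : ℂ)))) (Set.Ioi 0) := fun n j c =>
    (lap_term2 α hα _ (hs n) a₀ ha l hl j).1.const_mul c
  constructor
  · refine IntegrableOn.congr_fun ?_ e.symm measurableSet_Ioi
    exact integrable_finsetSum _ fun n _ => integrable_finsetSum _ fun k _ =>
      integrable_finsetSum _ fun j _ => hi n j _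
  · rw [setIntegral_congr_fun measurableSet_Ioi e]
    rw [integral_finsetSum _ fun n _ => integrable_finsetSum _ fun k _ =>
      integrable_finsetSum _ fun j _ => hi n j _]
    refine Finset.sum_congr rfl fun n _ => ?_
    rw [integral_finsetSum _ fun k _ => integrable_finsetSum _ fun j _ => hi n j _]
    simp only [Finset.sum_div, Finset.sum_mul, Finset.mul_sum]
    refine Finset.sum_congr rfl fun k _ => ?_
    rw [integral_finsetSum _ fun j _ => hi n j _]
    refine Finset.sum_congr rfl fun j _ => ?_
    rw [integral_const_mul, (lap_term2 α hα _ (hs n) a₀ ha l hl j).2]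
    simp only [div_eq_mul_inv, mul_inv]
    ring

lemma lap_rpow_split (t : ℝ) (ht : 0 < t) (N : ℕ) (β : ℂ) :
    t ^ ((N : ℝ) + β.re - 1) = t ^ N * ‖(t : ℂ) ^ (β - 1)‖ := by
  rw [Complex.norm_cpow_eq_rpow_re_of_pos ht, add_sub_assoc, Real.rpow_add ht, Real.rpow_natCast]
  simp

lemma lapM_far (α : ℝ) (β : ℂ) (A B : ℕ → ℂ) (a₀ : ℝ) (ha : 0 < a₀)
    (N : ℕ) (δ : ℝ) (hδ : 0 < δ) :
    ∃ C : ℝ, 0 ≤ C ∧ ∀ l t : ℝ, 0 ≤ l → δ ≤ t → ‖lapM α β A B a₀ N l t‖ ≤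
      C * (t ^ ((N : ℝ) + β.re - 1) * Real.exp (-(a₀ / 2 * l) * t ^ α)) := by
  choose C hC h using fun k => lap_Q_le A k (a₀ / 2) (by positivity)
  refine ⟨∑ n ∈ Finset.range N, (δ ^ (N - n))⁻¹ * ∑ k ∈ Finset.range (n + 1), ‖B (n - k)‖ * C k,
    Finset.sum_nonneg fun n _ => mul_nonneg (by positivity) (Finset.sum_nonneg fun k _ =>
      mul_nonneg (norm_nonneg _) (hC k)), fun l t hl ht => ?_⟩
  have ht0 : 0 < t := hδ.trans_le ht
  have hu : 0 ≤ l * t ^ α := by positivity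
  set u := l * t ^ α with hu'
  have hexp : Real.exp (-(a₀ / 2 * l) * t ^ α) = Real.exp (a₀ / 2 * u) * Real.exp (-(a₀ * u)) := by
    rw [← Real.exp_add, hu']; ring_nf
  rw [lap_rpow_split t ht0, hexp]
  unfold lapM
  rw [← hu', norm_mul, norm_mul, ← Complex.ofReal_neg, ← Complex.ofReal_exp, Complex.norm_real,
    Real.norm_of_nonneg (Real.exp_pos _).le]
  have key : ‖∑ n ∈ Finset.range N, (t : ℂ) ^ n * ∑ k ∈ Finset.range (n + 1), B (n - k) * lapQ A k u‖ ≤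
      (∑ n ∈ Finset.range N, (δ ^ (N - n))⁻¹ * ∑ k ∈ Finset.range (n + 1), ‖B (n - k)‖ * C k) *
        (t ^ N * Real.exp (a₀ / 2 * u)) := by
    refine (norm_sum_le _ _).trans ?_
    rw [Finset.sum_mul]
    refine Finset.sum_le_sum fun n hn => ?_
    have hn := Finset.mem_range.1 hn
    rw [norm_mul, norm_pow, Complex.norm_real, Real.norm_of_nonneg ht0.le]
    have h1 : t ^ n ≤ (δ ^ (N - n))⁻¹ * t ^ N := by
      rw [inv_mul_eq_div, le_div_iff₀ (by positivity)]
      calc t ^ n * δ ^ (N - n) ≤ t ^ n * t ^ (N - n) := by gcongr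
        _ = t ^ N := by rw [← pow_add]; congr 1; omega
    have h2 : ‖∑ k ∈ Finset.range (n + 1), B (n - k) * lapQ A k u‖ ≤
        (∑ k ∈ Finset.range (n + 1), ‖B (n - k)‖ * C k) * Real.exp (a₀ / 2 * u) := by
      refine (norm_sum_le _ _).trans ?_
      rw [Finset.sum_mul]
      refine Finset.sum_le_sum fun k _ => ?_
      rw [norm_mul, mul_assoc]
      gcongr
      exact h k u hu
    calc _ ≤ ((δ ^ (N - n))⁻¹ * t ^ N) * ((∑ k ∈ Finset.range (n + 1), ‖B (n - k)‖ * C k) * Real.exp (a₀ / 2 * u)) := by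
          gcongr
      _ = _ := by ring
  calc _ ≤ _ := mul_le_mul_of_nonneg_right (mul_le_mul_of_nonneg_right key (norm_nonneg _)) (Real.exp_pos _).le
    _ = _ := by ring

lemma lapM_near (α : ℝ) (β : ℂ) (A B : ℕ → ℂ) (a₀ : ℝ) (ha : 0 < a₀) (R H : ℝ → ℂ)
    (hR : ∀ N : ℕ, (fun t : ℝ => R t - ∑ k ∈ Finset.range N, A (k + 1) * (t : ℂ) ^ (k + 1))
      =O[𝓝[>] (0:ℝ)] fun t : ℝ => t ^ (N + 1))
    (hH : ∀ N : ℕ, (fun t : ℝ => H t - ∑ k ∈ Finset.range N, B k * (t : ℂ) ^ k)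
      =O[𝓝[>] (0:ℝ)] fun t : ℝ => t ^ N) (N : ℕ) :
    ∃ δ : ℝ, 0 < δ ∧ ∃ C : ℝ, 0 ≤ C ∧ ∀ l t : ℝ, 0 ≤ l → 0 < t → t < δ →
      ‖Complex.exp (-((l * t ^ α : ℝ) * (a₀ + R t))) * ((t : ℂ) ^ (β - 1) * H t) - lapM α β A B a₀ N l t‖ ≤
      C * (t ^ ((N : ℝ) + β.re - 1) * Real.exp (-(a₀ / 2 * l) * t ^ α)) := by
  obtain ⟨C, hC, h⟩ := (lap_prod_expand A B R H (a₀ / 2) (by positivity) hR hH N).exists_nonneg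
  have h := h.bound
  unfold lapL at h
  rw [eventually_prod_principal_iff] at h
  obtain ⟨δ, hδ, h⟩ := mem_nhdsGT_iff_exists_Ioo_subset.1 h
  refine ⟨δ, hδ, C, hC, fun l t hl ht0 ht => ?_⟩
  have hu : 0 ≤ l * t ^ α := by positivity
  have := h ⟨ht0, ht⟩ (l * t ^ α) hu
  simp only at this
  set u := l * t ^ α with hu'
  have hexp : Real.exp (-(a₀ / 2 * l) * t ^ α) = Real.exp (a₀ / 2 * u) * Real.exp (-(a₀ * u)) := by
    rw [← Real.exp_add, hu']; ring_nf
  rw [lap_rpow_split t ht0, hexp]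
  have e : Complex.exp (-((u : ℝ) * (a₀ + R t))) * ((t : ℂ) ^ (β - 1) * H t) - lapM α β A B a₀ N l t =
      (Complex.exp (-(u * R t)) * H t -
      ∑ n ∈ Finset.range N, (t : ℂ) ^ n * ∑ k ∈ Finset.range (n + 1), B (n - k) * lapQ A k u) *
      (t : ℂ) ^ (β - 1) * (Real.exp (-(a₀ * u)) : ℝ) := by
    unfold lapM
    rw [← hu', show (-((u : ℝ) * (a₀ + R t)) : ℂ) = -(u * R t) + (-((a₀ * u : ℝ) : ℂ)) by push_cast; ring,
      Complex.exp_add]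
    push_cast
    ring
  rw [e, norm_mul, norm_mul, Complex.norm_real, Real.norm_of_nonneg (Real.exp_pos _).le]
  rw [norm_mul (t ^ N), norm_pow, Real.norm_of_nonneg ht0.le, Real.norm_of_nonneg (Real.exp_pos _).le] at this
  calc _ ≤ _ := mul_le_mul_of_nonneg_right (mul_le_mul_of_nonneg_right this (norm_nonneg _)) (Real.exp_pos _).le
    _ = _ := by ring

lemma lap_core (α : ℝ) (hα : 0 < α) (β : ℂ) (hβ : 0 < β.re)
    (F : ℝ → ℝ) (G : ℝ → ℂ) (A : ℕ → ℝ) (B : ℕ → ℂ) (hA0 : 0 < A 0)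
    (T : Set ℝ) (hTm : MeasurableSet T) (hT0 : T ⊆ Set.Ioi 0) (ε : ℝ) (hε : 0 < ε)
    (hTε : Set.Ioo 0 ε ⊆ T)
    (hinf : ∀ δ : ℝ, 0 < δ → ∃ m : ℝ, 0 < m ∧ ∀ x ∈ T, δ ≤ x → m ≤ F x)
    (hF : ∀ N : ℕ,
      (fun x : ℝ => F x - ∑ k ∈ Finset.range N, A k * x ^ ((k : ℝ) + α))
        =O[𝓝[>] (0:ℝ)] fun x : ℝ => x ^ ((N : ℝ) + α))
    (hG : ∀ N : ℕ,
      (fun x : ℝ => G x - ∑ k ∈ Finset.range N, B k * (x : ℂ) ^ ((k : ℂ) + β - 1))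
        =O[𝓝[>] (0:ℝ)] fun x : ℝ => x ^ ((N : ℝ) + β.re - 1))
    (hint : ∃ Λ : ℝ, ∀ l : ℝ, Λ ≤ l →
      IntegrableOn (fun x : ℝ => (Real.exp (-l * F x) : ℂ) * G x) T) (N : ℕ) :
    (fun l : ℝ => (∫ x in T, (Real.exp (-l * F x) : ℂ) * G x) -
      ∫ t in Set.Ioi (0:ℝ), lapM α β (fun m => (A m : ℂ)) B (A 0) N l t)
      =O[atTop] fun l : ℝ => l ^ (-(((N : ℝ) + β.re) / α)) := by
  set R : ℝ → ℝ := fun t => F t / t ^ α - A 0 with hRdef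
  set H : ℝ → ℂ := fun t => G t / (t : ℂ) ^ (β - 1) with hHdef
  have hR : ∀ N : ℕ, (fun t : ℝ => (R t : ℂ) - ∑ k ∈ Finset.range N, (A (k + 1) : ℂ) * (t : ℂ) ^ (k + 1))
      =O[𝓝[>] (0:ℝ)] fun t : ℝ => t ^ (N + 1) := by
    intro N
    have h1 := (hF (N + 1)).mul (isBigO_refl (fun t : ℝ => (t ^ α)⁻¹) (𝓝[>] (0:ℝ)))
    have h2 : (fun t : ℝ => ((R t - ∑ k ∈ Finset.range N, A (k + 1) * t ^ (k + 1) : ℝ) : ℂ))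
      =O[𝓝[>] (0:ℝ)] fun t : ℝ => t ^ (N + 1) := by
      rw [← isBigO_norm_left]
      simp only [Complex.norm_real]
      rw [isBigO_norm_left]
      refine h1.congr' ?_ ?_
      · filter_upwards [self_mem_nhdsWithin] with t ht
        have ht : 0 < t := ht
        have hta : t ^ α ≠ 0 := by positivity
        rw [Finset.sum_range_succ', sub_mul, add_mul, Finset.sum_mul, hRdef]
        have : ∀ k : ℕ, A k * t ^ ((k : ℝ) + α) * (t ^ α)⁻¹ = A k * t ^ k := by
          intro k
          rw [Real.rpow_add ht, Real.rpow_natCast]; field_simp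
        simp_rw [this]
        simp only [pow_zero, mul_one, div_eq_mul_inv]
        ring
      · filter_upwards [self_mem_nhdsWithin] with t ht
        have ht : 0 < t := ht
        have hta : t ^ α ≠ 0 := by positivity
        rw [Real.rpow_add ht, Real.rpow_natCast]; field_simp
    refine h2.congr_left fun t => ?_
    push_cast
    rfl
  have hH : ∀ N : ℕ, (fun t : ℝ => H t - ∑ k ∈ Finset.range N, B k * (t : ℂ) ^ k)
      =O[𝓝[>] (0:ℝ)] fun t : ℝ => t ^ N := by
    intro N
    have h1 := (hG N).mul (isBigO_refl (fun t : ℝ => ((t : ℂ) ^ (β - 1))⁻¹) (𝓝[>] (0:ℝ))).norm_right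
    refine h1.congr' ?_ ?_
    · filter_upwards [self_mem_nhdsWithin] with t ht
      have ht : 0 < t := ht
      have ht' : (t : ℂ) ≠ 0 := by exact_mod_cast ht.ne'
      have hta : (t : ℂ) ^ (β - 1) ≠ 0 := by simp [Complex.cpow_eq_zero_iff, ht']
      rw [sub_mul, Finset.sum_mul, hHdef]
      have : ∀ k : ℕ, B k * (t : ℂ) ^ ((k : ℂ) + β - 1) * ((t : ℂ) ^ (β - 1))⁻¹ = B k * (t : ℂ) ^ k := by
        intro k
        rw [add_sub_assoc, Complex.cpow_add _ _ ht', Complex.cpow_natCast]; field_simp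
      simp_rw [this]
      rw [div_eq_mul_inv]
    · filter_upwards [self_mem_nhdsWithin] with t ht
      have ht : 0 < t := ht
      have ht' : (t : ℂ) ≠ 0 := by exact_mod_cast ht.ne'
      have hta : ‖(t : ℂ) ^ (β - 1)‖ ≠ 0 := by simp [Complex.cpow_eq_zero_iff, ht']
      rw [lap_rpow_split t ht, norm_inv]
      field_simp
  obtain ⟨δ₀, hδ₀, C₁, hC₁, hnear⟩ := lapM_near α β (fun m => (A m : ℂ)) B (A 0) hA0
    (fun t => (R t : ℂ)) H hR hH N
  set δ := min δ₀ ε with hδdef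
  have hδ : 0 < δ := lt_min hδ₀ hε
  obtain ⟨C₂, hC₂, hfar⟩ := lapM_far α β (fun m => (A m : ℂ)) B (A 0) hA0 N δ hδ
  obtain ⟨m, hm, hmF⟩ := hinf δ hδ
  obtain ⟨Λ, hΛ⟩ := hint
  set h : ℝ → ℝ → ℂ := fun l x => (Real.exp (-l * F x) : ℂ) * G x with hh
  set M := lapM α β (fun m => (A m : ℂ)) B (A 0) N with hM
  set bd : ℝ → ℝ → ℝ := fun l t => t ^ ((N : ℝ) + β.re - 1) * Real.exp (-(A 0 / 2 * l) * t ^ α) with hbd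
  have hq : -1 < (N : ℝ) + β.re - 1 := by
    have : (0:ℝ) ≤ N := by positivity
    linarith
  have hbdi : ∀ l, 0 < l → IntegrableOn (bd l) (Set.Ioi 0) := fun l hl =>
    integrableOn_rpow_mul_exp_neg_mul_rpow hq hα (by positivity)
  have hbd0 : ∀ l t, 0 < t → 0 ≤ bd l t := fun l t ht => by simp only [hbd]; positivity
  set U := Set.Ioo 0 δ with hU
  have hUT : U ⊆ T := fun x hx => hTε ⟨hx.1, hx.2.trans_le (min_le_right _ _)⟩
  have hU0 : U ⊆ Set.Ioi 0 := fun x hx => hx.1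
  have hUm : MeasurableSet U := measurableSet_Ioo
  -- decomposition
  have hdec : ∀ᶠ l in atTop, (∫ x in T, h l x) - ∫ t in Set.Ioi (0:ℝ), M l t =
      (∫ x in U, (h l x - M l x)) - (∫ x in Set.Ioi 0 \ U, M l x) + ∫ x in T \ U, h l x := by
    filter_upwards [eventually_ge_atTop Λ, eventually_gt_atTop 0] with l hl hl0
    have hMi := (lapM_integral α hα β hβ (fun m => (A m : ℂ)) B (A 0) hA0 N l hl0).1
    rw [integral_sub ((hΛ l hl).mono_set hUT) (hMi.mono_set hU0),
      integral_diff hUm hMi hU0, integral_diff hUm (hΛ l hl) hUT]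
    ring
  have hI : ∀ l : ℝ, 0 < l → ∫ t in Set.Ioi (0:ℝ), bd l t =
      ((A 0 / 2) ^ (-(((N : ℝ) + β.re) / α)) * (1 / α) * Real.Gamma (((N : ℝ) + β.re) / α)) *
        l ^ (-(((N : ℝ) + β.re) / α)) := by
    intro l hl
    have := integral_rpow_mul_exp_neg_mul_rpow (p := α) hα hq (b := A 0 / 2 * l) (by positivity)
    simp only [hbd]
    rw [this, sub_add_cancel, neg_div, Real.mul_rpow (by positivity) hl.le]
    ring
  have hbdBig : (fun l : ℝ => ∫ t in Set.Ioi (0:ℝ), bd l t) =O[atTop]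
      fun l : ℝ => l ^ (-(((N : ℝ) + β.re) / α)) := by
    refine IsBigO.congr' (isBigO_const_mul_self
      ((A 0 / 2) ^ (-(((N : ℝ) + β.re) / α)) * (1 / α) * Real.Gamma (((N : ℝ) + β.re) / α)) _ _) ?_
      EventuallyEq.rfl
    filter_upwards [eventually_gt_atTop 0] with l hl
    rw [hI l hl]
  have hgen : ∀ (V : Set ℝ) (φ : ℝ → ℝ → ℂ) (C : ℝ), MeasurableSet V → V ⊆ Set.Ioi 0 → 0 ≤ C →
      (∀ l t, 0 < l → t ∈ V → ‖φ l t‖ ≤ C * bd l t) →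
      (fun l : ℝ => ∫ t in V, φ l t) =O[atTop] fun l : ℝ => l ^ (-(((N : ℝ) + β.re) / α)) := by
    intro V φ C hV hV0 hC hφ
    refine IsBigO.trans (IsBigO.of_bound C ?_) hbdBig
    filter_upwards [eventually_gt_atTop 0] with l hl
    calc ‖∫ t in V, φ l t‖ ≤ ∫ t in V, C * bd l t := by
          refine norm_integral_le_of_norm_le (((hbdi l hl).mono_set hV0).const_mul C) ?_
          exact (ae_restrict_mem hV).mono fun t ht => hφ l t hl ht
      _ = C * ∫ t in V, bd l t := integral_const_mul _ _
      _ ≤ C * ∫ t in Set.Ioi 0, bd l t := by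
          refine mul_le_mul_of_nonneg_left ?_ hC
          refine setIntegral_mono_set (hbdi l hl) ?_ hV0.eventuallyLE
          exact (ae_restrict_mem measurableSet_Ioi).mono fun t ht => hbd0 l t ht
      _ ≤ C * ‖∫ t in Set.Ioi 0, bd l t‖ := by
          gcongr; exact Real.le_norm_self _
  have p1 := hgen U (fun l x => h l x - M l x) C₁ hUm hU0 hC₁ (by
    intro l t hl ht
    have ht0 : 0 < t := ht.1
    have ht' : (t : ℂ) ≠ 0 := by exact_mod_cast ht0.ne'
    have hta : (t : ℂ) ^ (β - 1) ≠ 0 := by simp [Complex.cpow_eq_zero_iff, ht']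
    have := hnear l t hl.le ht0 (ht.2.trans_le (min_le_left _ _))
    have e1 : (t : ℂ) ^ (β - 1) * H t = G t := by
      simp only [hHdef]; field_simp
    have e2 : (-((l * t ^ α : ℝ) * ((A 0 : ℂ) + (R t : ℂ))) : ℂ) = ((-l * F t : ℝ) : ℂ) := by
      rw [← Complex.ofReal_add, ← Complex.ofReal_mul, ← Complex.ofReal_neg]
      congr 1
      have hta : t ^ α ≠ 0 := by positivity
      simp only [hRdef]; field_simp; ring
    rw [e1, e2, ← Complex.ofReal_exp] at this
    exact this)
  have p2 := hgen (Set.Ioi 0 \ U) M C₂ (measurableSet_Ioi.diff hUm) Set.diff_subset hC₂ (by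
    intro l t hl ht
    have : δ ≤ t := by
      by_contra hc
      exact ht.2 ⟨ht.1, not_le.1 hc⟩
    exact hfar l t hl.le this)
  have p3 : (fun l : ℝ => ∫ x in T \ U, h l x) =O[atTop] fun l : ℝ => l ^ (-(((N : ℝ) + β.re) / α)) := by
    refine IsBigO.trans ?_ (isLittleO_exp_neg_mul_rpow_atTop hm _).isBigO
    refine IsBigO.of_bound (Real.exp (m * Λ) * ∫ x in T \ U, ‖h Λ x‖) ?_
    filter_upwards [eventually_ge_atTop Λ] with l hl
    have hi : IntegrableOn (fun x => ‖h Λ x‖) (T \ U) :=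
      ((hΛ Λ le_rfl).mono_set Set.diff_subset).norm
    calc ‖∫ x in T \ U, h l x‖ ≤ ∫ x in T \ U, Real.exp (-m * (l - Λ)) * ‖h Λ x‖ := by
          refine norm_integral_le_of_norm_le (hi.const_mul _) ?_
          refine (ae_restrict_mem (hTm.diff hUm)).mono fun t ht => ?_
          have hδt : δ ≤ t := by
            by_contra hc
            exact ht.2 ⟨hT0 ht.1, not_le.1 hc⟩
          have hF := hmF t ht.1 hδt
          simp only [hh]
          rw [norm_mul, norm_mul, Complex.norm_real, Complex.norm_real,
            Real.norm_of_nonneg (Real.exp_pos _).le, Real.norm_of_nonneg (Real.exp_pos _).le,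
            ← mul_assoc, ← Real.exp_add]
          gcongr
          nlinarith
      _ = Real.exp (-m * (l - Λ)) * ∫ x in T \ U, ‖h Λ x‖ := integral_const_mul _ _
      _ = _ := by
          rw [Real.norm_of_nonneg (Real.exp_pos _).le,
            show -m * (l - Λ) = m * Λ + -m * l by ring, Real.exp_add]
          ring
  exact ((p1.sub p2).add p3).congr' (hdec.mono fun l hl => hl.symm) EventuallyEq.rfl

/-- **Laplace's method (Erdélyi's theorem, with Wojdylo's explicit coefficients).**
Let `-∞ < a < b ≤ +∞`, `α > 0`, `Re β > 0`, and suppose that on `S = (a, b)`: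
(i) `f(x) > f(a)` and `f - f(a)` is bounded below by a positive constant on every
`[a + δ, b)`; (ii) `f` is differentiable with `f'`, `g` continuous near `a⁺`;
(iii) `f - f(a)`, `f'` and `g` admit the asymptotic expansions
`∑ aₖ (x-a)^{k+α}`, `∑ aₖ(k+α)(x-a)^{k+α-1}`, `∑ bₖ (x-a)^{k+β-1}` as `x → a⁺`;
(iv) `∫_a^b e^{-λ f(x)} g(x) dx` converges absolutely for all large `λ`.
Then for every `N`, as `λ → +∞`,
`∫_a^b e^{-λ f} g = e^{-λ f(a)} (∑_{n<N} Γ((n+β)/α) cₙ λ^{-(n+β)/α} + O(λ^{-(N+Re β)/α}))`,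
where `cₙ = (1/(α Γ((n+β)/α))) ∑_{k=0}^n b_{n-k} ∑_{j=0}^k ((-1)^j/(a₀^{(n+β)/α+j} j!))
Γ((n+β)/α+j) B_{k,j}(a₁,…,a_{k-j+1})`. -/
theorem laplace_method
    (a : ℝ) (b : EReal) (hab : (a : EReal) < b)
    (α : ℝ) (hα : 0 < α) (β : ℂ) (hβ : 0 < β.re)
    (f : ℝ → ℝ) (g : ℝ → ℂ) (A : ℕ → ℝ) (B : ℕ → ℂ)
    (hA0 : 0 < A 0) (hB0 : B 0 ≠ 0)
    (S : Set ℝ) (hS : S = {x : ℝ | a < x ∧ (x : EReal) < b})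
    -- (i)
    (hmin : ∀ x ∈ S, f a < f x)
    (hinf : ∀ δ : ℝ, 0 < δ → ∃ m : ℝ, 0 < m ∧
      ∀ x : ℝ, a + δ ≤ x → (x : EReal) < b → m ≤ f x - f a)
    -- (ii)
    (hreg : ∃ ε : ℝ, 0 < ε ∧ (∀ x ∈ Set.Ioo a (a + ε), DifferentiableAt ℝ f x) ∧
      ContinuousOn (deriv f) (Set.Ioo a (a + ε)) ∧ ContinuousOn g (Set.Ioo a (a + ε)))
    -- (iii)
    (hf : ∀ N : ℕ,
      (fun x : ℝ => f x - f a - ∑ k ∈ Finset.range N, A k * (x - a) ^ ((k : ℝ) + α))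
        =O[𝓝[>] a] fun x : ℝ => (x - a) ^ ((N : ℝ) + α))
    (hf' : ∀ N : ℕ,
      (fun x : ℝ =>
          deriv f x - ∑ k ∈ Finset.range N, A k * ((k : ℝ) + α) * (x - a) ^ ((k : ℝ) + α - 1))
        =O[𝓝[>] a] fun x : ℝ => (x - a) ^ ((N : ℝ) + α - 1))
    (hg : ∀ N : ℕ,
      (fun x : ℝ =>
          g x - ∑ k ∈ Finset.range N, B k * ((x : ℂ) - (a : ℂ)) ^ ((k : ℂ) + β - 1))
        =O[𝓝[>] a] fun x : ℝ => (x - a) ^ ((N : ℝ) + β.re - 1))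
    -- (iv)
    (hint : ∃ Λ : ℝ, ∀ l : ℝ, Λ ≤ l →
      IntegrableOn (fun x : ℝ => (Real.exp (-l * f x) : ℂ) * g x) S)
    -- the coefficients
    (c : ℕ → ℂ)
    (hc : ∀ n : ℕ, c n =
      (1 / ((α : ℂ) * Complex.Gamma (((n : ℂ) + β) / (α : ℂ)))) *
        ∑ k ∈ Finset.range (n + 1), B (n - k) *
          ∑ j ∈ Finset.range (k + 1),
            ((-1 : ℂ) ^ j /
                (((A 0 : ℂ) ^ ((((n : ℂ) + β) / (α : ℂ)) + (j : ℂ))) * (Nat.factorial j : ℂ))) *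
              Complex.Gamma ((((n : ℂ) + β) / (α : ℂ)) + (j : ℂ)) *
              obell (fun m => (A m : ℂ)) k j) :
    ∀ N : ℕ,
      (fun l : ℝ =>
          (∫ x in S, (Real.exp (-l * f x) : ℂ) * g x) -
            (Real.exp (-l * f a) : ℂ) *
              ∑ n ∈ Finset.range N,
                Complex.Gamma (((n : ℂ) + β) / (α : ℂ)) * c n *
                  (l : ℂ) ^ (-(((n : ℂ) + β) / (α : ℂ))))
        =O[atTop] fun l : ℝ =>
          Real.exp (-l * f a) * l ^ (-(((N : ℝ) + β.re) / α)) := by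
  intro N
  set T : Set ℝ := (fun t : ℝ => t + a) ⁻¹' S with hT
  have hSm : MeasurableSet S := by
    rw [hS]
    exact measurableSet_Ioi.inter
      ((isOpen_Iio (a := b)).measurableSet.preimage measurable_coe_real_ereal)
  have hTm : MeasurableSet T := hSm.preimage (measurable_id.add_const a)
  have hmp : MeasurePreserving (fun t : ℝ => t + a) volume volume :=
    measurePreserving_add_right volume a
  have hme : MeasurableEmbedding (fun t : ℝ => t + a) := measurableEmbedding_addRight a
  have hTmem : ∀ t, t ∈ T ↔ 0 < t ∧ ((t + a : ℝ) : EReal) < b := by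
    intro t
    rw [hT, Set.mem_preimage, hS]
    simp
  have hT0 : T ⊆ Set.Ioi 0 := fun t ht => ((hTmem t).1 ht).1
  obtain ⟨ε, hε, hTε⟩ : ∃ ε : ℝ, 0 < ε ∧ Set.Ioo 0 ε ⊆ T := by
    obtain ⟨y, hy1, hy2⟩ := EReal.lt_iff_exists_real_btwn.1 hab
    have hy1 : a < y := by exact_mod_cast hy1
    refine ⟨y - a, by linarith, fun t ht => (hTmem t).2 ⟨ht.1, lt_trans ?_ hy2⟩⟩
    have := ht.2
    exact_mod_cast (by linarith : t + a < y)
  have hshift : Tendsto (fun t : ℝ => t + a) (𝓝[>] (0:ℝ)) (𝓝[>] a) := by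
    refine tendsto_nhdsWithin_iff.2 ⟨?_, ?_⟩
    · have : Tendsto (fun t : ℝ => t + a) (𝓝 0) (𝓝 (0 + a)) :=
        (continuous_id.add continuous_const).tendsto 0
      rw [zero_add] at this
      exact tendsto_nhdsWithin_of_tendsto_nhds this
    · filter_upwards [self_mem_nhdsWithin] with t ht
      have ht : 0 < t := ht
      simpa using ht
  have hcore := lap_core α hα β hβ (fun t => f (t + a) - f a) (fun t => g (t + a)) A B hA0 T hTm hT0
    ε hε hTε ?_ ?_ ?_ ?_ N
  rotate_left
  · intro δ hδ
    obtain ⟨m, hm, h⟩ := hinf δ hδ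
    exact ⟨m, hm, fun x hx hxδ => h (x + a) (by linarith) ((hTmem x).1 hx).2⟩
  · intro N
    refine ((hf N).comp_tendsto hshift).congr (fun t => ?_) (fun t => ?_) <;> simp
  · intro N
    refine ((hg N).comp_tendsto hshift).congr (fun t => ?_) (fun t => ?_) <;> simp
  · obtain ⟨Λ, hΛ⟩ := hint
    refine ⟨Λ, fun l hl => ?_⟩
    have h1 := ((hmp.integrableOn_comp_preimage hme (s := S)).2 (hΛ l hl)).const_mul
      (Real.exp (l * f a) : ℂ)
    refine h1.congr (Eventually.of_forall fun t => ?_)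
    simp only [Function.comp]
    rw [← mul_assoc, ← Complex.ofReal_mul, ← Real.exp_add]
    ring_nf
  have hE : (fun l : ℝ => ((Real.exp (-l * f a) : ℝ) : ℂ)) =O[atTop]
      fun l : ℝ => Real.exp (-l * f a) :=
    IsBigO.of_bound 1 (Eventually.of_forall fun l => by rw [Complex.norm_real, one_mul])
  refine (hE.mul hcore).congr' ?_ EventuallyEq.rfl
  filter_upwards [eventually_gt_atTop 0] with l hl
  rw [(lapM_integral α hα β hβ (fun m => (A m : ℂ)) B (A 0) hA0 N l hl).2, mul_sub]
  congr 1
  · rw [← hmp.setIntegral_preimage_emb hme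
      (fun x : ℝ => (Real.exp (-l * f x) : ℂ) * g x) S, ← integral_const_mul]
    refine setIntegral_congr_fun hTm fun t _ => ?_
    rw [← mul_assoc, ← Complex.ofReal_mul, ← Real.exp_add]
    ring_nf
  · congr 1
    refine Finset.sum_congr rfl fun n _ => ?_
    have hG0 : Complex.Gamma (((n : ℂ) + β) / (α : ℂ)) ≠ 0 := by
      apply Complex.Gamma_ne_zero_of_re_pos
      rw [Complex.div_ofReal_re]
      have : 0 < ((n : ℂ) + β).re := by simp; positivity
      positivity
    rw [hc n]
    have hα' : (α : ℂ) ≠ 0 := by exact_mod_cast hα.ne'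
    congr 1
    rw [← mul_assoc, one_div, mul_inv, mul_comm (α : ℂ)⁻¹, ← mul_assoc, mul_inv_cancel₀ hG0, one_mul,
      div_eq_inv_mul]
end

section
/- Let φ : ℂ → ℂ be analytic at 0 with φ(0) = 1 and Taylor expansion φ(x) = 1 + Σ_{m≥1} f_m x^m, and let ρ ∈ ℂ. Then the function ψ(x) = exp(ρ · Log φ(x)) (principal branch of the logarithm, defined on a neighborhood of 0 on which φ takes values near 1) is analytic at 0, and for every n ≥ 0 its n-th Taylor coefficient at 0 satisfies ψ^{(n)}(0)/n! = A_{ρ,n}(f₁,…,f_n). -/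
open Finset

/-- Generalized binomial coefficient `C(ρ, k) = ρ(ρ-1)⋯(ρ-k+1)/k!`. -/
noncomputable def gbinom (ρ : ℂ) (k : ℕ) : ℂ :=
  (∏ i ∈ Finset.range k, (ρ - i)) / (Nat.factorial k : ℂ)

/-- Ordinary potential polynomials `A_{ρ,n}(f₁,…,f_n) = ∑_{k=0}^n C(ρ,k) B_{n,k}`. -/
noncomputable def opot (ρ : ℂ) (f : ℕ → ℂ) (n : ℕ) : ℂ :=
  ∑ k ∈ Finset.range (n + 1), gbinom ρ k * obell f n k


/-- Taylor series at `0`. -/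
noncomputable def tser (g : ℂ → ℂ) : PowerSeries ℂ :=
  PowerSeries.mk fun n => iteratedDeriv n g 0 / (Nat.factorial n : ℂ)

lemma tser_mul {f g : ℂ → ℂ} (hf : AnalyticAt ℂ f 0) (hg : AnalyticAt ℂ g 0) :
    tser (f * g) = tser f * tser g := by
  ext n
  simp only [tser, PowerSeries.coeff_mk, iteratedDeriv_mul hf.contDiffAt hg.contDiffAt,
    PowerSeries.coeff_mul, Finset.Nat.sum_antidiagonal_eq_sum_range_succ_mk, Nat.succ_eq_add_one,
    Finset.sum_div]
  refine Finset.sum_congr rfl fun i hi ↦ ?_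
  rw [Nat.cast_choose _ (by grind)]
  field_simp [Nat.factorial_ne_zero]

lemma tser_add {f g : ℂ → ℂ} (hf : AnalyticAt ℂ f 0) (hg : AnalyticAt ℂ g 0) :
    tser (f + g) = tser f + tser g := by
  ext n
  simp [tser, iteratedDeriv_add hf.contDiffAt hg.contDiffAt, add_div]

lemma tser_const (c : ℂ) : tser (fun _ => c) = PowerSeries.C c := by
  ext n
  rw [tser, PowerSeries.coeff_mk, iteratedDeriv_const, PowerSeries.coeff_C]
  split_ifs with h <;> simp [h]

lemma tser_pow {f : ℂ → ℂ} (hf : AnalyticAt ℂ f 0) (k : ℕ) :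
    tser (f ^ k) = tser f ^ k := by
  induction k with
  | zero => rw [pow_zero, pow_zero]; exact (tser_const 1).trans (map_one _)
  | succ k ih => rw [pow_succ, pow_succ, tser_mul (hf.pow k) hf, ih]

lemma tser_congr {f g : ℂ → ℂ} (h : f =ᶠ[nhds 0] g) : tser f = tser g := by
  ext n
  simp [tser, h.iteratedDeriv_eq n]

lemma tser_sum {f : ℂ → ℂ} (hf : AnalyticAt ℂ f 0) (c : ℕ → ℂ) (N : ℕ) :
    AnalyticAt ℂ (fun x => ∑ k ∈ range N, c k * f x ^ k) 0 ∧
    tser (fun x => ∑ k ∈ range N, c k * f x ^ k)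
      = ∑ k ∈ range N, PowerSeries.C (c k) * tser f ^ k := by
  induction N with
  | zero => simpa using ⟨analyticAt_const, (tser_const 0).trans (map_zero _)⟩
  | succ N ih =>
    have h1 : AnalyticAt ℂ ((fun _ => c N) * f ^ N) 0 := analyticAt_const.mul (hf.pow N)
    have e : (fun x => ∑ k ∈ range (N+1), c k * f x ^ k) =
        (fun x => ∑ k ∈ range N, c k * f x ^ k) + ((fun _ => c N) * f ^ N) := by
      ext x; simp [sum_range_succ]
    rw [e]
    refine ⟨ih.1.add h1, ?_⟩
    rw [tser_add ih.1 h1, ih.2, tser_mul analyticAt_const (hf.pow N), tser_pow hf, tser_const,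
      sum_range_succ]

lemma taylor_fact {f : ℂ → ℂ} {p : FormalMultilinearSeries ℂ ℂ ℂ} (h : HasFPowerSeriesAt f p 0)
    (N : ℕ) : ∃ g : ℂ → ℂ, AnalyticAt ℂ g 0 ∧
      ∀ z, f z = ∑ k ∈ range N, p.coeff k * z ^ k + z ^ N * g z := by
  refine ⟨(Function.swap dslope 0)^[N] f,
    (h.has_fpower_series_iterate_dslope_fslope N).analyticAt, ?_⟩
  intro z
  induction N with
  | zero => simp
  | succ N ih =>
    have h0 := (h.has_fpower_series_iterate_dslope_fslope N).coeff_zero 0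
    have h1 : p.coeff N = ((Function.swap dslope 0)^[N] f) 0 := by
      rw [← h0]
      have := FormalMultilinearSeries.coeff_iterate_fslope (p := p) N 0
      rw [zero_add] at this
      rw [← this, FormalMultilinearSeries.coeff]
      congr 1
      ext i; exact i.elim0
    have h2 := sub_smul_dslope ((Function.swap dslope 0)^[N] f) 0 z
    rw [ih, sum_range_succ, h1, Function.iterate_succ_apply']
    simp only [sub_zero, smul_eq_mul] at h2
    simp only [Function.swap] at h2 ⊢
    linear_combination (- z ^ N) * h2

lemma binom_coeff (ρ : ℂ) (k : ℕ) : (binomialSeries ℂ ρ).coeff k = gbinom ρ k := by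
  have h : ∀ k : ℕ, (descPochhammer ℤ k).smeval ρ = ∏ i ∈ Finset.range k, (ρ - i) := by
    intro k
    induction k with
    | zero => simp
    | succ k ih =>
      rw [prod_range_succ, ← ih]
      simp [descPochhammer_succ_right, Polynomial.smeval_mul, Polynomial.smeval_natCast]
  rw [binomialSeries, FormalMultilinearSeries.coeff_ofScalars, Ring.choose_eq_smul, h, gbinom,
    smul_eq_mul]
  ring

theorem taylor_coeff_cpow_eq_opot (φ : ℂ → ℂ) (f : ℕ → ℂ) (ρ : ℂ)
    (hφ : AnalyticAt ℂ φ 0) (hφ0 : φ 0 = 1)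
    (hf : ∀ m : ℕ, 1 ≤ m → f m = iteratedDeriv m φ 0 / (Nat.factorial m : ℂ)) :
    AnalyticAt ℂ (fun x => Complex.exp (ρ * Complex.log (φ x))) 0 ∧
      ∀ n : ℕ,
        iteratedDeriv n (fun x => Complex.exp (ρ * Complex.log (φ x))) 0 /
            (Nat.factorial n : ℂ) = opot ρ f n := by
  refine ⟨(analyticAt_const.mul (hφ.clog (by simp [hφ0]))).cexp, fun n => ?_⟩
  set u : ℂ → ℂ := φ + (fun _ => -1) with hu
  have hua : AnalyticAt ℂ u 0 := hφ.add analyticAt_const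
  have hu0 : u 0 = 0 := by simp [hu, hφ0]
  have hF : tser u = PowerSeries.mk fun m => if m = 0 then 0 else f m := by
    ext m
    rw [hu, tser_add hφ analyticAt_const, tser_const, map_add, PowerSeries.coeff_C, tser,
      PowerSeries.coeff_mk, PowerSeries.coeff_mk]
    split_ifs with h
    · simp [h, hφ0]
    · rw [hf m (by omega), add_zero]
  obtain ⟨g, hg, hgz⟩ := taylor_fact (Complex.one_add_cpow_hasFPowerSeriesAt_zero (a := ρ)) (n + 1)
  have hgu : AnalyticAt ℂ (g ∘ u) 0 := AnalyticAt.comp (by rwa [hu0]) hua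
  have key : (fun x => Complex.exp (ρ * Complex.log (φ x))) =ᶠ[nhds 0]
      (fun x => ∑ k ∈ range (n + 1), gbinom ρ k * u x ^ k) + u ^ (n + 1) * (g ∘ u) := by
    filter_upwards [hφ.continuousAt.eventually_ne (by rw [hφ0]; exact one_ne_zero)] with x hx
    have := hgz (u x)
    simp only [binom_coeff] at this
    simp only [Pi.add_apply, Pi.mul_apply, Pi.pow_apply, Function.comp_apply]
    rw [← this, show 1 + u x = φ x by simp [hu], Complex.cpow_def_of_ne_zero hx, mul_comm]
  have h1 := tser_sum hua (gbinom ρ) (n + 1)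
  have h2 := congrArg (PowerSeries.coeff n) (tser_congr key)
  rw [tser_add h1.1 ((hua.pow _).mul hgu), h1.2, tser_mul (hua.pow _) hgu, tser_pow hua, map_add,
    hF] at h2
  have h3 : PowerSeries.coeff n
      ((PowerSeries.mk fun m => if m = 0 then 0 else f m) ^ (n + 1) * tser (g ∘ u)) = 0 := by
    have hX : (PowerSeries.X : PowerSeries ℂ) ∣ PowerSeries.mk fun m => if m = 0 then 0 else f m := by
      rw [PowerSeries.X_dvd_iff]; simp
    exact PowerSeries.X_pow_dvd_iff.1 ((pow_dvd_pow_of_dvd hX (n + 1)).mul_right _) n (by omega)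
  rw [h3, add_zero, map_sum] at h2
  simpa [tser, opot, obell, PowerSeries.coeff_C_mul] using h2
end

section
/- For all integers k ≥ 0 and n ≥ 0, the coefficient of x^n in the formal power series F^k (the k-th power of F) equals 2^k Σ_{j=0}^k (−1)^{n+k+j} C(k,j) · j! · s(n+k+j, j)/(n+k+j)!. -/
open Finset

/-- The unsigned Stirling numbers of the first kind: `s(0,0) = 1`, `s(n,j) = 0` for
`j > n` or (`n ≥ 1` and `j = 0`), and `s(n+1,j) = s(n,j-1) + n·s(n,j)`. -/
def stirling1 : ℕ → ℕ → ℕ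
  | 0, 0 => 1
  | 0, _ + 1 => 0
  | _ + 1, 0 => 0
  | n + 1, j + 1 => stirling1 n j + n * stirling1 n (j + 1)

/-- The formal power series `F(x) = 2(x - log(1+x))/x² = ∑_{m≥0} 2(-1)^m x^m/(m+2)`. -/
noncomputable def F : PowerSeries ℝ :=
  PowerSeries.mk fun m => 2 * (-1 : ℝ) ^ m / ((m : ℝ) + 2)

/-- `G = -log(1+x)` as a power series. -/
noncomputable def negLog : PowerSeries ℝ :=
  PowerSeries.mk fun m => (-1 : ℝ) ^ m / (m : ℝ)

theorem negLog_ode :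
    (1 + PowerSeries.X) * PowerSeries.derivative ℝ negLog = -1 := by
  ext m
  rw [add_mul, one_mul, map_add]
  cases m with
  | zero => simp [negLog, PowerSeries.coeff_derivative]
  | succ m =>
    rw [PowerSeries.coeff_succ_X_mul]
    simp only [negLog, PowerSeries.coeff_derivative, PowerSeries.coeff_mk, map_neg,
      PowerSeries.coeff_one]
    have h1 : (m : ℝ) + 1 ≠ 0 := by positivity
    have h2 : (m : ℝ) + 1 + 1 ≠ 0 := by positivity
    push_cast
    field_simp
    ring

theorem negLog_pow_ode (j : ℕ) :
    (1 + PowerSeries.X) * PowerSeries.derivative ℝ (negLog ^ (j + 1)) =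
      -(((j : PowerSeries ℝ) + 1) * negLog ^ j) := by
  rw [Derivation.leibniz_pow]
  simp only [Nat.add_sub_cancel, smul_eq_mul, nsmul_eq_mul]
  push_cast
  linear_combination ((j : PowerSeries ℝ) + 1) * negLog ^ j * negLog_ode

theorem negLog_pow_rec (j m : ℕ) :
    ((m : ℝ) + 1) * PowerSeries.coeff (m + 1) (negLog ^ (j + 1)) =
      -((j : ℝ) + 1) * PowerSeries.coeff m (negLog ^ j)
        - m * PowerSeries.coeff m (negLog ^ (j + 1)) := by
  have h := congrArg (PowerSeries.coeff m) (negLog_pow_ode j)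
  have e : ((j : PowerSeries ℝ) + 1) = PowerSeries.C ((j : ℝ) + 1) := by simp
  rw [e, add_mul, one_mul, map_add, map_neg, PowerSeries.coeff_C_mul] at h
  cases m with
  | zero =>
    simp only [PowerSeries.coeff_derivative, PowerSeries.coeff_zero_X_mul] at h
    push_cast at h ⊢
    linear_combination h
  | succ m =>
    rw [PowerSeries.coeff_succ_X_mul] at h
    simp only [PowerSeries.coeff_derivative] at h
    push_cast at h ⊢
    linear_combination h

theorem coeff_negLog_pow (j m : ℕ) :
    PowerSeries.coeff m (negLog ^ j) =
      (-1 : ℝ) ^ m * (Nat.factorial j : ℝ) * (stirling1 m j : ℝ) / (Nat.factorial m : ℝ) := by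
  induction j generalizing m with
  | zero => cases m <;> simp [stirling1, PowerSeries.coeff_one]
  | succ j ihj =>
    induction m with
    | zero => simp [stirling1, negLog]
    | succ m ihm =>
      have h := negLog_pow_rec j m
      rw [ihj, ihm] at h
      have h1 : (m : ℝ) + 1 ≠ 0 := by positivity
      have h2 : (Nat.factorial m : ℝ) ≠ 0 := by positivity
      apply mul_left_cancel₀ h1
      rw [h]
      simp only [stirling1, Nat.factorial_succ]
      push_cast
      field_simp
      ring

theorem X_sq_mul_F : PowerSeries.X ^ 2 * F = PowerSeries.C (2 : ℝ) * (negLog + PowerSeries.X) := by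
  ext m
  rw [PowerSeries.coeff_C_mul, PowerSeries.coeff_X_pow_mul', map_add]
  rcases m with _ | _ | m
  · simp [negLog]
  · simp [negLog]
  · simp only [F, negLog, PowerSeries.coeff_mk, PowerSeries.coeff_X]
    simp
    ring

theorem coeff_F_pow (k n : ℕ) :
    PowerSeries.coeff n (F ^ k) =
      2 ^ k * ∑ j ∈ Finset.range (k + 1),
        (-1 : ℝ) ^ (n + k + j) * (Nat.choose k j : ℝ) * (Nat.factorial j : ℝ) *
          (stirling1 (n + k + j) j : ℝ) / (Nat.factorial (n + k + j) : ℝ) := by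
  have h := congrArg (fun p => PowerSeries.coeff (n + 2 * k) (p ^ k)) X_sq_mul_F
  simp only [mul_pow, ← pow_mul] at h
  rw [PowerSeries.coeff_X_pow_mul, ← map_pow, PowerSeries.coeff_C_mul, add_pow, map_sum] at h
  rw [h]
  congr 1
  apply Finset.sum_congr rfl
  intro j hj
  have hj' : j ≤ k := by simpa [Nat.lt_succ_iff] using hj
  have e : n + 2 * k = (n + k + j) + (k - j) := by omega
  have e2 : ((Nat.choose k j : ℕ) : PowerSeries ℝ) = PowerSeries.C (Nat.choose k j : ℝ) := by simp
  rw [e2, PowerSeries.coeff_mul_C, e, PowerSeries.coeff_mul_X_pow, coeff_negLog_pow]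
  ring
end

section
/- For every n ≥ 0, the n-th Stirling coefficient γ_n satisfies γ_n = ((−1)^n (2n)!/(2^n n!)) · [x^{2n}] G^{−(n+1/2)} = Σ_{k=0}^{2n} ((−1)^n 2^{n+k+1} Γ(3n+3/2)/(√π (2n+2k+1)(2n−k)!)) Σ_{j=0}^k ((−1)^j S(2n+k+j, j)/((k−j)! (2n+k+j)!)), where [x^{2n}] denotes the coefficient of x^{2n}. -/
open Finset

/-- Generalized binomial coefficient `C(ρ, k) = ρ(ρ-1)⋯(ρ-k+1)/k!` for real `ρ`. -/
noncomputable def gbinomR (ρ : ℝ) (k : ℕ) : ℝ :=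
  (∏ i ∈ Finset.range k, (ρ - i)) / (Nat.factorial k : ℝ)

/-- For real `ρ`, the formal power series `F^ρ := ∑_{k≥0} C(ρ,k) (F-1)^k`; since `F - 1`
has zero constant term, the coefficient of `x^n` only involves `k ≤ n`. -/
noncomputable def Fpow (ρ : ℝ) : PowerSeries ℝ :=
  PowerSeries.mk fun n =>
    ∑ k ∈ Finset.range (n + 1), gbinomR ρ k * PowerSeries.coeff n ((F - 1) ^ k)

/-- The `n`-th Stirling coefficient:
`γ_n = ((-1)^n (2n)!/(2^n n!)) · [x^{2n}] F^{-(n+1/2)}`. -/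
noncomputable def stirlingCoeff (n : ℕ) : ℝ :=
  ((-1 : ℝ) ^ n * (Nat.factorial (2 * n) : ℝ) / (2 ^ n * (Nat.factorial n : ℝ))) *
    PowerSeries.coeff (2 * n) (Fpow (-((n : ℝ) + 1 / 2)))

/-- The Stirling numbers of the second kind: `S(0,0) = 1`, `S(n,j) = 0` for `j > n` or
(`n ≥ 1` and `j = 0`), and `S(n+1,j) = S(n,j-1) + j·S(n,j)`. -/
def stirling2 : ℕ → ℕ → ℕ
  | 0, 0 => 1
  | 0, _ + 1 => 0
  | _ + 1, 0 => 0
  | n + 1, j + 1 => stirling2 n j + (j + 1) * stirling2 n (j + 1)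

/-- The formal power series `G(x) = 2(eˣ - x - 1)/x² = ∑_{m≥0} 2 x^m/(m+2)!`. -/
noncomputable def G : PowerSeries ℝ :=
  PowerSeries.mk fun m => 2 / (Nat.factorial (m + 2) : ℝ)

/-- For real `ρ`, the formal power series `G^ρ := ∑_{k≥0} C(ρ,k) (G-1)^k`. -/
noncomputable def Gpow (ρ : ℝ) : PowerSeries ℝ :=
  PowerSeries.mk fun n =>
    ∑ k ∈ Finset.range (n + 1), gbinomR ρ k * PowerSeries.coeff n ((G - 1) ^ k)

open PowerSeries in
noncomputable def hpow (H : PowerSeries ℝ) (ρ : ℝ) : PowerSeries ℝ :=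
  PowerSeries.mk fun n =>
    ∑ k ∈ Finset.range (n + 1), gbinomR ρ k * PowerSeries.coeff n ((H - 1) ^ k)

theorem gbinomR_eq_choose (ρ : ℝ) (k : ℕ) : gbinomR ρ k = Ring.choose ρ k := by
  rw [Ring.choose_eq_smul, gbinomR, smul_eq_mul, div_eq_inv_mul]
  congr 1
  rw [← descPochhammer_eval_eq_prod_range, ← Polynomial.aeval_eq_smeval,
    ← Polynomial.eval_map_algebraMap, descPochhammer_map]

theorem hasSubst_sub_one (H : PowerSeries ℝ) (hH : PowerSeries.constantCoeff H = 1) :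
    PowerSeries.HasSubst (H - 1) := by
  apply PowerSeries.HasSubst.of_constantCoeff_zero'
  simp [hH]

theorem hpow_eq_subst (H : PowerSeries ℝ) (hH : PowerSeries.constantCoeff H = 1) (ρ : ℝ) :
    hpow H ρ = (PowerSeries.binomialSeries ℝ ρ).subst (H - 1) := by
  ext n
  rw [PowerSeries.coeff_subst' (hasSubst_sub_one H hH), hpow, PowerSeries.coeff_mk,
    finsum_eq_sum_of_support_subset (s := Finset.range (n + 1))]
  · refine Finset.sum_congr rfl fun k _ => ?_
    simp [gbinomR_eq_choose]
  · intro k hk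
    by_contra hlt
    apply hk
    have hX : (PowerSeries.X : PowerSeries ℝ) ∣ H - 1 := by
      rw [PowerSeries.X_dvd_iff]; simp [hH]
    have := pow_dvd_pow_of_dvd hX k
    rw [PowerSeries.X_pow_dvd_iff] at this
    have h2 : n < k := by
      simp at hlt; omega
    simp [this n h2]

theorem hpow_constantCoeff (H : PowerSeries ℝ) (ρ : ℝ) :
    PowerSeries.constantCoeff (hpow H ρ) = 1 := by
  rw [← PowerSeries.coeff_zero_eq_constantCoeff_apply, hpow, PowerSeries.coeff_mk]
  simp [gbinomR]

theorem hpow_sq_mul (H : PowerSeries ℝ) (hH : PowerSeries.constantCoeff H = 1) (n : ℕ) :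
    hpow H (-((n : ℝ) + 1 / 2)) ^ 2 * H ^ (2 * n + 1) = 1 := by
  have hs := hasSubst_sub_one H hH
  have h1 : (PowerSeries.binomialSeries ℝ (-((n : ℝ) + 1 / 2))) ^ 2 *
      (1 + PowerSeries.X) ^ (2 * n + 1) = (1 : PowerSeries ℝ) := by
    rw [← PowerSeries.binomialSeries_nat (R := ℝ), pow_two, ← PowerSeries.binomialSeries_add,
      ← PowerSeries.binomialSeries_add]
    convert PowerSeries.binomialSeries_zero (R := ℝ) (A := ℝ) using 2
    push_cast; ring
  have h2 := congrArg (PowerSeries.substAlgHom (R := ℝ) hs) h1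
  rw [map_mul, map_pow, map_pow, map_add, map_one, PowerSeries.substAlgHom_X,
    PowerSeries.coe_substAlgHom, ← hpow_eq_subst H hH] at h2
  simpa using h2

theorem hpow_deriv (H : PowerSeries ℝ) (hH : PowerSeries.constantCoeff H = 1) (n : ℕ) :
    2 * (PowerSeries.derivative ℝ (hpow H (-((n : ℝ) + 1 / 2))) * H) +
      ((2 * n + 1 : ℕ) : PowerSeries ℝ) *
        (hpow H (-((n : ℝ) + 1 / 2)) * PowerSeries.derivative ℝ H) = 0 := by
  have h := hpow_sq_mul H hH n
  set P := hpow H (-((n : ℝ) + 1 / 2))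
  have hP : P ≠ 0 := by
    rintro h0; rw [h0] at h; simp at h
  have hH0 : H ≠ 0 := by
    rintro h0; rw [h0] at h; simp at h
  have h2 := congrArg (PowerSeries.derivative ℝ) h
  rw [Derivation.leibniz, PowerSeries.derivative_pow, PowerSeries.derivative_pow,
    PowerSeries.derivative_one] at h2
  simp only [smul_eq_mul] at h2
  have h3 : P * H ^ (2 * n) * (2 * (PowerSeries.derivative ℝ P * H) +
      ((2 * n + 1 : ℕ) : PowerSeries ℝ) * (P * PowerSeries.derivative ℝ H)) = 0 := by
    rw [← h2]
    simp only [Nat.add_sub_cancel]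
    push_cast
    ring
  rcases mul_eq_zero.mp h3 with h4 | h4
  · exact absurd h4 (mul_ne_zero hP (pow_ne_zero _ hH0))
  · exact h4

open PowerSeries in
theorem residue_const (ε J : PowerSeries ℝ) (hJ : J * ε = 1) (N : ℕ) :
    coeff N (J ^ (N + 1) * (ε + X * derivative ℝ ε)) = if N = 0 then 1 else 0 := by
  have hd : derivative ℝ J = - (J ^ 2 * derivative ℝ ε) := by
    have h2 := congrArg (derivative ℝ) hJ
    rw [Derivation.leibniz, derivative_one] at h2
    simp only [smul_eq_mul] at h2
    linear_combination J * h2 - (derivative ℝ J) * hJ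
  have e1 : J ^ (N + 1) * (ε + X * derivative ℝ ε) = J ^ N + X * (J ^ (N + 1) * derivative ℝ ε) := by
    linear_combination J ^ N * hJ
  rw [e1]
  cases N with
  | zero => simp
  | succ M =>
    have h3 : derivative ℝ (J ^ (M + 1)) = - ((M + 1 : ℕ) : ℝ) • (J ^ (M + 1 + 1) * derivative ℝ ε) := by
      rw [derivative_pow, hd, smul_eq_C_mul]
      simp only [Nat.add_sub_cancel, map_neg, map_natCast]
      ring
    have h4 := congrArg (coeff M) h3
    rw [coeff_derivative, coeff_smul] at h4
    rw [map_add, coeff_succ_X_mul]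
    simp only [Nat.add_eq_zero_iff, one_ne_zero, and_false, if_false]
    have h5 : ((M : ℝ) + 1) ≠ 0 := by positivity
    apply mul_left_cancel₀ h5
    push_cast at h4
    rw [smul_eq_mul] at h4
    linear_combination h4

open PowerSeries in
theorem residue_subst (ε J : PowerSeries ℝ) (hJ : J * ε = 1) (N : ℕ) : ∀ (H : PowerSeries ℝ),
    coeff N (H.subst (X * ε) * J ^ (N + 1) * (ε + X * derivative ℝ ε)) = coeff N H := by
  have hs : HasSubst (X * ε) := HasSubst.of_constantCoeff_zero' (by simp)
  have key : ∀ H : PowerSeries ℝ, H.subst (X * ε) = C (coeff 0 H) +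
      X * ε * (mk fun p => coeff (p + 1) H).subst (X * ε) := by
    intro H
    conv_lhs => rw [H.eq_X_mul_shift_add_const]
    rw [subst_add hs, subst_mul hs, subst_X hs]
    have : (C (constantCoeff H)).subst (X * ε) = C (constantCoeff H) := subst_C _
    rw [this, coeff_zero_eq_constantCoeff_apply, add_comm]
  induction N with
  | zero =>
    intro H
    rw [key]
    have := residue_const ε J hJ 0
    simp at this ⊢
    linear_combination (constantCoeff H) * this
  | succ M ih =>
    intro H
    rw [key]
    set H1 : PowerSeries ℝ := mk fun p => coeff (p + 1) H with hH1
    have e : (C (coeff 0 H) + X * ε * H1.subst (X * ε)) * J ^ (M + 1 + 1) *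
      (ε + X * derivative ℝ ε) = C (coeff 0 H) * (J ^ (M + 1 + 1) * (ε + X * derivative ℝ ε)) +
        X * (H1.subst (X * ε) * J ^ (M + 1) * (ε + X * derivative ℝ ε)) := by
      linear_combination (X * H1.subst (X * ε) * J ^ (M + 1) * (ε + X * derivative ℝ ε)) * hJ
    rw [e, map_add, coeff_C_mul, residue_const ε J hJ, coeff_succ_X_mul, ih H1]
    simp [hH1]

open PowerSeries in
theorem X_sq_F : X ^ 2 * F = 2 * (X - PowerSeries.log ℝ) := by
  ext n
  rw [show (2 : PowerSeries ℝ) = C 2 from rfl, coeff_C_mul]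
  rcases n with _ | _ | n
  · simp [coeff_X_pow_mul']
  · simp [coeff_X_pow_mul']
  · rw [show n + 1 + 1 = n + 2 from rfl, coeff_X_pow_mul]
    simp [F, coeff_X, coeff_log]
    have : (n : ℝ) + 1 + 1 ≠ 0 := by positivity
    have : (n : ℝ) + 2 ≠ 0 := by positivity
    field_simp
    ring

open PowerSeries in
theorem X_sq_G : X ^ 2 * G = 2 * (PowerSeries.exp ℝ - 1 - X) := by
  ext n
  rw [show (2 : PowerSeries ℝ) = C 2 from rfl, coeff_C_mul]
  rcases n with _ | _ | n
  · simp [coeff_X_pow_mul']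
  · simp [coeff_X_pow_mul', coeff_one, coeff_exp]
  · rw [show n + 1 + 1 = n + 2 from rfl, coeff_X_pow_mul]
    simp [G, coeff_X, coeff_exp, coeff_one, div_eq_mul_inv]

open PowerSeries in
theorem log_subst_exp : (PowerSeries.log ℝ).subst (PowerSeries.exp ℝ - 1) = (X : PowerSeries ℝ) := by
  have hs : HasSubst (PowerSeries.exp ℝ - 1) := HasSubst.exp_sub_one
  apply derivative.ext
  · rw [derivative_subst hs, derivative_X, deriv_log]
    have h1 : (mk fun n ↦ algebraMap ℚ ℝ ((-1 : ℚ) ^ n)) * (1 + X) = (1 : PowerSeries ℝ) := by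
      ext n
      rcases n with _ | n
      · simp [mul_add]
      · rw [mul_add, mul_one, map_add, coeff_succ_mul_X]
        simp [coeff_one, pow_succ]
    have h2 := congrArg (substAlgHom (R := ℝ) hs) h1
    rw [map_mul, map_add, map_one, substAlgHom_X, coe_substAlgHom] at h2
    rw [map_sub, derivative_exp, derivative_one, sub_zero]
    simpa using h2
  · rw [constantCoeff_X]
    exact constantCoeff_subst_eq_zero
      (show constantCoeff (PowerSeries.exp ℝ - 1) = 0 by simp) _ (by simp)

/-- `(e^x - 1)/x`. -/
noncomputable def epsS : PowerSeries ℝ := PowerSeries.mk fun m => 1 / (Nat.factorial (m + 1) : ℝ)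

open PowerSeries in
theorem X_epsS : X * epsS = PowerSeries.exp ℝ - 1 := by
  ext n
  rcases n with _ | n
  · simp
  · rw [coeff_succ_X_mul]
    simp [epsS, coeff_exp, coeff_one]

open PowerSeries in
theorem F_subst : F.subst (X * epsS) * epsS ^ 2 = G := by
  have hs : HasSubst (X * epsS) := HasSubst.of_constantCoeff_zero' (by simp)
  have h := congrArg (substAlgHom (R := ℝ) hs) X_sq_F
  rw [map_mul, map_mul, map_pow, map_sub, substAlgHom_X, map_ofNat, coe_substAlgHom] at h
  rw [X_epsS, log_subst_exp, ← X_epsS] at h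
  have h2 := X_sq_G
  rw [← X_epsS] at h2
  have hX : (X : PowerSeries ℝ) ^ 2 ≠ 0 := pow_ne_zero _ X_ne_zero
  apply mul_left_cancel₀ hX
  rw [h2, ← h]
  ring

theorem F_const : PowerSeries.constantCoeff F = 1 := by
  rw [← PowerSeries.coeff_zero_eq_constantCoeff_apply, F, PowerSeries.coeff_mk]; norm_num

theorem G_const : PowerSeries.constantCoeff G = 1 := by
  rw [← PowerSeries.coeff_zero_eq_constantCoeff_apply, G, PowerSeries.coeff_mk]; norm_num

theorem epsS_const : PowerSeries.constantCoeff epsS = 1 := by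
  rw [← PowerSeries.coeff_zero_eq_constantCoeff_apply, epsS, PowerSeries.coeff_mk]; norm_num

open PowerSeries in
theorem Fpow_subst (n : ℕ) : (hpow F (-((n : ℝ) + 1 / 2))).subst (X * epsS) =
    hpow G (-((n : ℝ) + 1 / 2)) * epsS ^ (2 * n + 1) := by
  have hs : HasSubst (X * epsS) := HasSubst.of_constantCoeff_zero' (by simp)
  have hF := congrArg (substAlgHom (R := ℝ) hs) (hpow_sq_mul F F_const n)
  rw [map_mul, map_pow, map_pow, map_one, coe_substAlgHom] at hF
  have hG := hpow_sq_mul G G_const n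
  have cF : constantCoeff ((hpow F (-((n : ℝ) + 1 / 2))).subst (X * epsS)) = 1 := by
    have h0 : constantCoeff ((hpow F (-((n : ℝ) + 1 / 2)) - 1).subst (X * epsS)) = 0 :=
      constantCoeff_subst_eq_zero (show constantCoeff (X * epsS) = 0 by simp) _
        (by simp [hpow_constantCoeff])
    rw [← coe_substAlgHom hs, map_sub, map_one, map_sub, map_one] at h0
    rw [← coe_substAlgHom hs]
    linarith
  have cG : constantCoeff (hpow G (-((n : ℝ) + 1 / 2)) * epsS ^ (2 * n + 1)) = 1 := by
    simp [hpow_constantCoeff, epsS_const]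
  rw [← F_subst] at hG
  rw [← F_subst] at cG
  rw [← F_subst]
  set A := (hpow F (-((n : ℝ) + 1 / 2))).subst (X * epsS)
  set B := F.subst (X * epsS)
  set P := hpow (B * epsS ^ 2) (-((n : ℝ) + 1 / 2))
  have hB : B ^ (2 * n + 1) ≠ 0 := by
    intro h0; rw [h0] at hF; simp at hF
  have : A ^ 2 = (P * epsS ^ (2 * n + 1)) ^ 2 := by
    apply mul_right_cancel₀ hB
    rw [hF, ← hG]
    ring
  rcases sq_eq_sq_iff_eq_or_eq_neg.mp this with h | h
  · exact h
  · rw [h, map_neg, cG] at cF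
    norm_num at cF

open PowerSeries in
theorem claimA (n : ℕ) : coeff (2 * n) (hpow F (-((n : ℝ) + 1 / 2))) =
    coeff (2 * n) (hpow G (-((n : ℝ) + 1 / 2)) * PowerSeries.exp ℝ) := by
  have hJ : epsS⁻¹ * epsS = 1 := PowerSeries.inv_mul_cancel _ (by rw [epsS_const]; norm_num)
  rw [← residue_subst epsS epsS⁻¹ hJ, Fpow_subst]
  have hd : epsS + X * derivative ℝ epsS = PowerSeries.exp ℝ := by
    have h := congrArg (derivative ℝ) X_epsS
    rw [map_sub, derivative_exp, derivative_one, Derivation.leibniz, derivative_X] at h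
    simp only [smul_eq_mul] at h
    linear_combination h
  rw [hd, mul_assoc (hpow G _), ← mul_pow, mul_comm epsS, hJ, one_pow, mul_one]

open PowerSeries in
theorem claimB (n : ℕ) :
    coeff (2 * n) (hpow G (-((n : ℝ) + 1 / 2)) * (PowerSeries.exp ℝ - 1)) = 0 := by
  have hd := hpow_deriv G G_const n
  set P := hpow G (-((n : ℝ) + 1 / 2))
  have h1 : 2 * (PowerSeries.exp ℝ - 1) = 2 * X * G + X ^ 2 * derivative ℝ G := by
    have h := congrArg (derivative ℝ) X_sq_G
    rw [show (2 : PowerSeries ℝ) * (PowerSeries.exp ℝ - 1 - X) = 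
      (PowerSeries.exp ℝ - 1 - X) + (PowerSeries.exp ℝ - 1 - X) by ring] at h
    rw [map_add, map_sub, map_sub, derivative_exp, derivative_one, Derivation.leibniz,
      derivative_X, derivative_pow, derivative_X] at h
    simp only [smul_eq_mul] at h
    norm_num at h
    linear_combination -h
  rcases n with _ | m
  · simp
  · have h2 : C (2 * (1 - (2 * (m + 1 : ℕ) : ℝ))) * (P * (PowerSeries.exp ℝ - 1)) =
      X * (C (2 * (1 - (2 * (m + 1 : ℕ) : ℝ))) * (P * G) + X * (C 2 * derivative ℝ (P * G))) := by
      rw [Derivation.leibniz]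
      simp only [smul_eq_mul, map_mul, map_sub, map_one, map_natCast, map_ofNat]
      push_cast at hd ⊢
      linear_combination (1 - 2 * ((m : PowerSeries ℝ) + 1)) * P * h1 - X ^ 2 * hd
    have h3 := congrArg (coeff (2 * (m + 1))) h2
    rw [coeff_C_mul, show 2 * (m + 1) = (2 * m + 1) + 1 by ring, coeff_succ_X_mul, map_add,
      coeff_C_mul, coeff_succ_X_mul, coeff_C_mul, coeff_derivative] at h3
    have h4 : (2 * (1 - (2 * (m + 1 : ℕ) : ℝ))) ≠ 0 := by
      push_cast
      have : (0 : ℝ) ≤ m := by positivity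
      intro h; linarith
    apply mul_left_cancel₀ h4
    rw [show 2 * (m + 1) = (2 * m + 1) + 1 by ring, h3]
    push_cast
    ring

theorem part1 (n : ℕ) : PowerSeries.coeff (2 * n) (Fpow (-((n : ℝ) + 1 / 2))) =
    PowerSeries.coeff (2 * n) (Gpow (-((n : ℝ) + 1 / 2))) := by
  have hA := claimA n
  have hB := claimB n
  rw [mul_sub, mul_one, map_sub] at hB
  change PowerSeries.coeff (2 * n) (hpow F _) = PowerSeries.coeff (2 * n) (hpow G _)
  linarith

open PowerSeries in
theorem egf_stirling2 (m : ℕ) : ∀ j : ℕ, coeff m ((PowerSeries.exp ℝ - 1) ^ j) =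
    (Nat.factorial j : ℝ) * (stirling2 m j : ℝ) / (Nat.factorial m : ℝ) := by
  induction m with
  | zero =>
    intro j
    rcases j with _ | j
    · simp [stirling2]
    · simp [stirling2]
  | succ m ih =>
    intro j
    rcases j with _ | j
    · simp [stirling2, coeff_one]
    · have h : derivative ℝ ((PowerSeries.exp ℝ - 1) ^ (j + 1)) =
          C ((j + 1 : ℕ) : ℝ) * ((PowerSeries.exp ℝ - 1) ^ (j + 1) + (PowerSeries.exp ℝ - 1) ^ j) := by
        rw [derivative_pow, map_sub, derivative_exp, derivative_one, map_natCast]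
        simp only [Nat.add_sub_cancel]
        ring
      have h2 := congrArg (coeff m) h
      rw [coeff_derivative, coeff_C_mul, map_add, ih, ih] at h2
      have h3 : (m : ℝ) + 1 ≠ 0 := by positivity
      apply mul_right_cancel₀ h3
      rw [h2, stirling2, Nat.factorial_succ, Nat.factorial_succ]
      have : (Nat.factorial m : ℝ) ≠ 0 := by positivity
      push_cast
      field_simp
      ring

open PowerSeries in
theorem coeff_G_pow (N k : ℕ) : coeff N (G ^ k) = 2 ^ k * (Nat.factorial k : ℝ) * (-1) ^ k *
    ∑ j ∈ Finset.range (k + 1), (-1 : ℝ) ^ j * (stirling2 (N + k + j) j : ℝ) /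
              ((Nat.factorial (k - j) : ℝ) * (Nat.factorial (N + k + j) : ℝ)) := by
  have h : X ^ (2 * k) * G ^ k = C ((2 : ℝ) ^ k) * ((PowerSeries.exp ℝ - 1) + (- X)) ^ k := by
    rw [pow_mul, ← mul_pow, X_sq_G, mul_pow, map_pow, map_ofNat, sub_eq_add_neg _ X]
  have h2 := congrArg (coeff (N + 2 * k)) h
  rw [coeff_X_pow_mul] at h2
  rw [h2, coeff_C_mul, add_pow, map_sum, mul_assoc, mul_assoc]
  congr 1
  rw [Finset.mul_sum, Finset.mul_sum]
  refine Finset.sum_congr rfl fun j hj => ?_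
  have hjk : j ≤ k := by simp at hj; omega
  obtain ⟨d, rfl⟩ := Nat.exists_eq_add_of_le hjk
  have e : (PowerSeries.exp ℝ - 1) ^ j * (-X) ^ (j + d - j) * (((j + d).choose j : ℕ) : PowerSeries ℝ)
      = C ((-1) ^ d * (((j + d).choose j : ℕ) : ℝ)) * (X ^ d * (PowerSeries.exp ℝ - 1) ^ j) := by
    rw [Nat.add_sub_cancel_left, map_mul, map_pow, map_neg, map_one, map_natCast, neg_pow]
    ring
  rw [e, coeff_C_mul, show N + 2 * (j + d) = (N + (j + d) + j) + d by ring, coeff_X_pow_mul,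
    egf_stirling2, Nat.add_sub_cancel_left,
    ← Nat.choose_mul_factorial_mul_factorial (show j ≤ j + d by omega), Nat.add_sub_cancel_left]
  have h1 : (Nat.factorial d : ℝ) ≠ 0 := by positivity
  have h3 : (Nat.factorial (N + (j + d) + j) : ℝ) ≠ 0 := by positivity
  have h4 : ((-1 : ℝ)) ^ (j + d) * (-1) ^ j = (-1) ^ d := by
    rw [pow_add, mul_right_comm, ← mul_pow]; norm_num
  push_cast
  field_simp
  linear_combination (-((j + d).choose j : ℝ) * (stirling2 (N + (j + d) + j) j : ℝ)) * h4

theorem alt_sum (ρ : ℝ) (k d : ℕ) :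
    (∑ m ∈ Finset.range (k + d + 1), gbinomR ρ m * ((m.choose k : ℕ) : ℝ) * (-1) ^ (m + k)) *
      (ρ - k) = (-1) ^ d * (∏ i ∈ Finset.range (k + d + 1), (ρ - i)) /
        ((Nat.factorial k : ℝ) * (Nat.factorial d : ℝ)) := by
  induction d with
  | zero =>
    rw [add_zero, Finset.sum_range_succ, Finset.sum_eq_zero, Finset.prod_range_succ]
    · have : (-1 : ℝ) ^ (k + k) = 1 := by rw [← two_mul, pow_mul]; norm_num
      simp [this, gbinomR]
      ring
    · intro m hm
      rw [Nat.choose_eq_zero_of_lt (by simpa using hm)]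
      simp
  | succ d ih =>
    rw [← add_assoc, Finset.sum_range_succ, add_mul, ih, gbinomR, Finset.prod_range_succ _ (k + d + 1)]
    have e : (-1 : ℝ) ^ (k + d + 1 + k) = - (-1) ^ d := by
      rw [show k + d + 1 + k = 2 * k + d + 1 by ring, pow_succ, pow_add, pow_mul]; norm_num
    have hc : ((Nat.factorial (k + d + 1) : ℕ) : ℝ) =
        (((k + d + 1).choose k : ℕ) : ℝ) * (Nat.factorial k : ℝ) * (Nat.factorial (d + 1) : ℝ) := by
      rw [← Nat.choose_mul_factorial_mul_factorial (show k ≤ k + d + 1 by omega),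
        show k + d + 1 - k = d + 1 by omega]
      push_cast; ring
    have hc0 : (((k + d + 1).choose k : ℕ) : ℝ) ≠ 0 := by
      have := Nat.choose_pos (show k ≤ k + d + 1 by omega)
      positivity
    rw [e, hc, Nat.factorial_succ, pow_succ]
    have h1 : (Nat.factorial d : ℝ) ≠ 0 := by positivity
    have h2 : (Nat.factorial k : ℝ) ≠ 0 := by positivity
    have h3 : (d : ℝ) + 1 ≠ 0 := by positivity
    push_cast
    field_simp
    ring

open PowerSeries in
theorem coeff_hpow_G (ρ : ℝ) (N : ℕ) (hρ : ∀ k : ℕ, ρ - k ≠ 0) :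
    coeff N (hpow G ρ) = ∑ k ∈ Finset.range (N + 1),
      ((-1) ^ (N - k) * (∏ i ∈ Finset.range (N + 1), (ρ - i)) /
        ((Nat.factorial k : ℝ) * (Nat.factorial (N - k) : ℝ)) / (ρ - k)) * coeff N (G ^ k) := by
  have h1 : ∀ m ∈ Finset.range (N + 1), coeff N ((G - 1) ^ m) =
      ∑ k ∈ Finset.range (N + 1), ((m.choose k : ℕ) : ℝ) * (-1) ^ (m + k) * coeff N (G ^ k) := by
    intro m hm
    have hm' : m ≤ N := by simp at hm; omega
    rw [sub_eq_add_neg, add_pow, map_sum]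
    rw [← Finset.sum_subset (Finset.range_subset_range.mpr (show m + 1 ≤ N + 1 by omega))]
    · refine Finset.sum_congr rfl fun k hk => ?_
      have hkm : k ≤ m := by simp at hk; omega
      have e : G ^ k * (-1) ^ (m - k) * ((m.choose k : ℕ) : PowerSeries ℝ) =
          C (((m.choose k : ℕ) : ℝ) * (-1) ^ (m - k)) * G ^ k := by
        rw [map_mul, map_pow, map_neg, map_one, map_natCast]; ring
      rw [e, coeff_C_mul]
      congr 2
      obtain ⟨d, rfl⟩ := Nat.exists_eq_add_of_le hkm
      rw [Nat.add_sub_cancel_left, show k + d + k = 2 * k + d by ring, pow_add, pow_mul]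
      norm_num
    · intro k _ hk
      rw [Nat.choose_eq_zero_of_lt (by simp at hk; omega)]
      simp
  rw [hpow, coeff_mk]
  rw [Finset.sum_congr rfl fun m hm => by rw [h1 m hm, Finset.mul_sum], Finset.sum_comm]
  refine Finset.sum_congr rfl fun k hk => ?_
  have hkN : k ≤ N := by simp at hk; omega
  obtain ⟨d, rfl⟩ := Nat.exists_eq_add_of_le hkN
  rw [Nat.add_sub_cancel_left, ← alt_sum, mul_div_assoc, div_self (hρ k), mul_one, Finset.sum_mul]
  refine Finset.sum_congr rfl fun m _ => ?_
  ring

theorem gamma_prod (a : ℝ) (ha : 0 < a) (m : ℕ) :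
    Real.Gamma (a + m) = Real.Gamma a * ∏ i ∈ Finset.range m, (a + i) := by
  induction m with
  | zero => simp
  | succ m ih =>
    rw [Finset.prod_range_succ, Nat.cast_succ, ← add_assoc, Real.Gamma_add_one (by positivity), ih]
    ring

theorem gamma_half (n : ℕ) : (Nat.factorial n : ℝ) * 4 ^ n * Real.Gamma (n + 1 / 2) =
    (Nat.factorial (2 * n) : ℝ) * Real.sqrt Real.pi := by
  induction n with
  | zero => simpa using Real.Gamma_one_half_eq
  | succ n ih =>
    rw [Nat.cast_succ, show (n : ℝ) + 1 + 1 / 2 = (n + 1 / 2) + 1 by ring,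
      Real.Gamma_add_one (by positivity), show 2 * (n + 1) = 2 * n + 1 + 1 by ring,
      Nat.factorial_succ, Nat.factorial_succ, Nat.factorial_succ]
    push_cast
    linear_combination (4 * ((n : ℝ) + 1) * (n + 1 / 2)) * ih

theorem part2 (n : ℕ) :
    ((-1 : ℝ) ^ n * (Nat.factorial (2 * n) : ℝ) / (2 ^ n * (Nat.factorial n : ℝ))) *
        PowerSeries.coeff (2 * n) (hpow G (-((n : ℝ) + 1 / 2))) =
      ∑ k ∈ Finset.range (2 * n + 1),
        ((-1 : ℝ) ^ n * 2 ^ (n + k + 1) * Real.Gamma (3 * n + 3 / 2) /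
            (Real.sqrt Real.pi * (2 * (n : ℝ) + 2 * k + 1) * (Nat.factorial (2 * n - k) : ℝ))) *
          ∑ j ∈ Finset.range (k + 1),
            (-1 : ℝ) ^ j * (stirling2 (2 * n + k + j) j : ℝ) /
              ((Nat.factorial (k - j) : ℝ) * (Nat.factorial (2 * n + k + j) : ℝ)) := by
  have hρ : ∀ k : ℕ, -((n : ℝ) + 1 / 2) - k ≠ 0 := by
    intro k h
    have : 0 < (n : ℝ) + 1 / 2 + k := by positivity
    linarith
  rw [coeff_hpow_G _ _ hρ, Finset.mul_sum]
  refine Finset.sum_congr rfl fun k hk => ?_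
  have hkN : k ≤ 2 * n := by simp at hk; omega
  rw [coeff_G_pow]
  set T := ∑ j ∈ Finset.range (k + 1),
            (-1 : ℝ) ^ j * (stirling2 (2 * n + k + j) j : ℝ) /
              ((Nat.factorial (k - j) : ℝ) * (Nat.factorial (2 * n + k + j) : ℝ))
  have hprod : ∏ i ∈ Finset.range (2 * n + 1), (-((n : ℝ) + 1 / 2) - i) =
      - ∏ i ∈ Finset.range (2 * n + 1), ((n : ℝ) + 1 / 2 + i) := by
    rw [Finset.prod_congr rfl fun (i : ℕ) _ =>
      show -((n : ℝ) + 1 / 2) - (i : ℝ) = (-1) * ((n : ℝ) + 1 / 2 + i) by ring,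
      Finset.prod_mul_distrib, Finset.prod_const, Finset.card_range, pow_succ, pow_mul]
    norm_num
  have hG : Real.Gamma (3 * n + 3 / 2) = Real.Gamma (n + 1 / 2) *
      ∏ i ∈ Finset.range (2 * n + 1), ((n : ℝ) + 1 / 2 + i) := by
    rw [← gamma_prod _ (by positivity)]
    congr 1
    push_cast; ring
  rw [hprod, hG]
  set Q := ∏ i ∈ Finset.range (2 * n + 1), ((n : ℝ) + 1 / 2 + i)
  have hg := gamma_half n
  have hs : (-1 : ℝ) ^ (2 * n - k) * (-1) ^ k = 1 := by
    rw [← pow_add, Nat.sub_add_cancel hkN, pow_mul]; norm_num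
  have hpi : Real.sqrt Real.pi ≠ 0 := by have := Real.pi_pos; positivity
  have f1 : (Nat.factorial n : ℝ) ≠ 0 := by positivity
  have f2 : (Nat.factorial k : ℝ) ≠ 0 := by positivity
  have f3 : (Nat.factorial (2 * n - k) : ℝ) ≠ 0 := by positivity
  have f4 : (2 * (n : ℝ) + 2 * k + 1) ≠ 0 := by positivity
  have hgam : Real.Gamma (n + 1 / 2) =
      (Nat.factorial (2 * n) : ℝ) * Real.sqrt Real.pi / ((Nat.factorial n : ℝ) * 4 ^ n) := by
    rw [eq_div_iff (by positivity), ← hg]; ring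
  rw [hgam, show -((n : ℝ) + 1 / 2) - k = - ((2 * (n : ℝ) + 2 * k + 1) / 2) by ring,
    show (4 : ℝ) = 2 * 2 by norm_num, mul_pow, pow_succ, pow_add]
  generalize (-1 : ℝ) ^ (2 * n - k) = u at *
  generalize (-1 : ℝ) ^ k = v at *
  generalize (Nat.factorial (2 * n - k) : ℝ) = w at *
  generalize (2 * (n : ℝ) + 2 * k + 1) = z at *
  field_simp
  linear_combination Q * T * hs

/-- The Stirling coefficients equal `((-1)^n (2n)!/(2^n n!)) [x^{2n}] G^{-(n+1/2)}` and are
given explicitly in terms of the Stirling numbers of the second kind (formula (24)). -/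
theorem stirlingCoeff_eq_via_G (n : ℕ) :
    stirlingCoeff n =
      ((-1 : ℝ) ^ n * (Nat.factorial (2 * n) : ℝ) / (2 ^ n * (Nat.factorial n : ℝ))) *
        PowerSeries.coeff (2 * n) (Gpow (-((n : ℝ) + 1 / 2))) ∧
    stirlingCoeff n =
      ∑ k ∈ Finset.range (2 * n + 1),
        ((-1 : ℝ) ^ n * 2 ^ (n + k + 1) * Real.Gamma (3 * n + 3 / 2) /
            (Real.sqrt Real.pi * (2 * (n : ℝ) + 2 * k + 1) * (Nat.factorial (2 * n - k) : ℝ))) *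
          ∑ j ∈ Finset.range (k + 1),
            (-1 : ℝ) ^ j * (stirling2 (2 * n + k + j) j : ℝ) /
              ((Nat.factorial (k - j) : ℝ) * (Nat.factorial (2 * n + k + j) : ℝ)) := by
  have h2 := part2 n
  have h1 := part1 n
  refine ⟨by rw [stirlingCoeff, h1], ?_⟩
  rw [← h2, stirlingCoeff, h1]
  rfl
end

section
/- For every integer N ≥ 0, as λ → +∞ through real values, Γ(λ) = √(2π) λ^{λ−1/2} e^{−λ} ( Σ_{n=0}^{N−1} (−1)^n γ_n λ^{−n} + O(λ^{−N}) ), where γ_n are the Stirling coefficients; in particular γ_0 = 1, γ_1 = −1/12, γ_2 = 1/288. -/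
open Finset

open Asymptotics Filter

section StirlingAux
open MeasureTheory

noncomputable def PhiS (x : ℝ) : ℝ := if x = 0 then 1 else 2 * (x - Real.log (1 + x)) / x ^ 2

lemma PhiS_mul (x : ℝ) : x ^ 2 / 2 * PhiS x = x - Real.log (1 + x) := by
  unfold PhiS
  split_ifs with h
  · simp [h]
  · field_simp

lemma PhiS_approx (J : ℕ) (x : ℝ) (hx : |x| ≤ 1 / 5) :
    |PhiS x - ∑ i ∈ Finset.range J, PowerSeries.coeff i F * x ^ i| ≤ 5 / 2 * |x| ^ J := by
  by_cases h0 : x = 0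
  · subst h0
    rcases J with _ | J
    · simp [PhiS]; norm_num
    · rw [Finset.sum_range_succ']
      simp [PhiS, F]
  have hlog := Real.abs_log_sub_add_sum_range_le (x := -x) (by rw [abs_neg]; linarith) (J + 1)
  have hsum : ∑ i ∈ Finset.range (J + 1), (-x) ^ (i + 1) / ((i : ℝ) + 1)
      = -x + x ^ 2 / 2 * ∑ i ∈ Finset.range J, PowerSeries.coeff i F * x ^ i := by
    rw [Finset.sum_range_succ', Finset.mul_sum, add_comm]
    congr 1
    · simp
    · apply Finset.sum_congr rfl
      intro i _
      simp only [F, PowerSeries.coeff_mk]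
      have : (i : ℝ) + 2 ≠ 0 := by positivity
      push_cast
      rw [show (i : ℝ) + 1 + 1 = i + 2 by ring, neg_pow]
      field_simp
      ring
  rw [hsum, abs_neg, sub_neg_eq_add] at hlog
  set S := ∑ i ∈ Finset.range J, PowerSeries.coeff i F * x ^ i
  have h2 : -x + x ^ 2 / 2 * S + Real.log (1 + x) = - (x ^ 2 / 2 * (PhiS x - S)) := by
    rw [mul_sub, PhiS_mul]; ring
  rw [h2, abs_neg, abs_mul, abs_of_nonneg (by positivity : 0 ≤ x ^ 2 / 2)] at hlog
  have h3 : |x| ^ (J + 1 + 1) / (1 - |x|) ≤ x ^ 2 / 2 * (5 / 2 * |x| ^ J) := by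
    rw [div_le_iff₀ (by linarith)]
    have : |x| ^ (J + 1 + 1) = x ^ 2 * |x| ^ J := by rw [← sq_abs]; ring
    rw [this]
    have : 0 ≤ x ^ 2 * |x| ^ J := by positivity
    nlinarith
  exact le_of_mul_le_mul_left (hlog.trans h3) (by positivity)

def ApproxS (J : ℕ) (G : PowerSeries ℝ) (g : ℝ → ℝ) : Prop :=
  ∃ C, ∀ x : ℝ, |x| ≤ 1 / 5 → |g x - (PowerSeries.trunc J G).eval x| ≤ C * |x| ^ J

lemma eval_trunc_S (J : ℕ) (G : PowerSeries ℝ) (x : ℝ) :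
    (PowerSeries.trunc J G).eval x = ∑ i ∈ Finset.range J, PowerSeries.coeff i G * x ^ i := by
  have := PowerSeries.eval₂_trunc_eq_sum_range x (RingHom.id ℝ) J G
  simpa using this

lemma poly_bdd (p : Polynomial ℝ) : ∃ C, 0 ≤ C ∧ ∀ x : ℝ, |x| ≤ 1 / 5 → |p.eval x| ≤ C := by
  have hc : IsCompact (Set.Icc (-(1/5) : ℝ) (1/5)) := isCompact_Icc
  obtain ⟨C, hC⟩ := hc.exists_bound_of_continuousOn (f := fun x => p.eval x) p.continuous.continuousOn
  refine ⟨max C 0, le_max_right _ _, fun x hx => le_max_of_le_left ?_⟩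
  exact hC x (abs_le.mp hx)

lemma ApproxS.mul {J : ℕ} {G H : PowerSeries ℝ} {g h : ℝ → ℝ} (hg : ApproxS J G g)
    (hh : ApproxS J H h) : ApproxS J (G * H) (fun x => g x * h x) := by
  obtain ⟨C, hC⟩ := hg
  obtain ⟨D, hD⟩ := hh
  set p := PowerSeries.trunc J G with hp
  set q := PowerSeries.trunc J H with hq
  have hdvd : Polynomial.X ^ J ∣ p * q - PowerSeries.trunc J (G * H) := by
    rw [Polynomial.X_pow_dvd_iff]
    intro d hd
    have h1 : PowerSeries.trunc J ((p * q : Polynomial ℝ) : PowerSeries ℝ)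
        = PowerSeries.trunc J (G * H) := by
      rw [Polynomial.coe_mul, hp, hq, PowerSeries.trunc_trunc_mul_trunc]
    rw [Polynomial.coeff_sub, ← h1, PowerSeries.coeff_trunc, if_pos hd, Polynomial.coeff_coe,
      sub_self]
  obtain ⟨r, hr⟩ := hdvd
  obtain ⟨P, hP0, hP⟩ := poly_bdd p
  obtain ⟨Q, hQ0, hQ⟩ := poly_bdd q
  obtain ⟨R, hR0, hR⟩ := poly_bdd r
  refine ⟨(P + |C|) * |D| + Q * |C| + R, fun x hx => ?_⟩
  have e1 := (hC x hx).trans (mul_le_mul_of_nonneg_right (le_abs_self C) (by positivity))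
  have e2 := (hD x hx).trans (mul_le_mul_of_nonneg_right (le_abs_self D) (by positivity))
  have ev : (PowerSeries.trunc J (G * H)).eval x = p.eval x * q.eval x - x ^ J * r.eval x := by
    have := congrArg (Polynomial.eval x) hr
    simp at this
    linarith
  have hxJ : |x| ^ J ≤ 1 := pow_le_one₀ (abs_nonneg _) (by linarith)
  have e3 : |g x| ≤ P + |C| := by
    have : |g x| ≤ |g x - p.eval x| + |p.eval x| := by
      simpa using abs_add_le (g x - p.eval x) (p.eval x)
    have := hP x hx
    nlinarith [abs_nonneg C]
  calc |g x * h x - (PowerSeries.trunc J (G * H)).eval x|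
      = |g x * (h x - q.eval x) + q.eval x * (g x - p.eval x) + x ^ J * r.eval x| := by
        rw [ev]; congr 1; ring
    _ ≤ |g x| * |h x - q.eval x| + |q.eval x| * |g x - p.eval x| + |x| ^ J * |r.eval x| := by
        refine (abs_add_three _ _ _).trans ?_
        simp [abs_mul]
    _ ≤ (P + |C|) * (|D| * |x| ^ J) + Q * (|C| * |x| ^ J) + |x| ^ J * R := by
        gcongr
        · exact hQ x hx
        · exact hR x hx
    _ = _ := by ring

lemma ApproxS.one (J : ℕ) : ApproxS J 1 (fun _ => 1) := by
  refine ⟨1, fun x hx => ?_⟩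
  rcases J with _ | J
  · simp
  · simp

lemma ApproxS.f (J : ℕ) : ApproxS J (F - 1) (fun x => PhiS x - 1) := by
  obtain ⟨C, hC⟩ := ApproxS.one J
  refine ⟨5 / 2 + C, fun x hx => ?_⟩
  have h1 := PhiS_approx J x hx
  rw [← eval_trunc_S] at h1
  rw [map_sub, Polynomial.eval_sub, add_mul]
  have h2 := hC x hx
  calc _ = |(PhiS x - (PowerSeries.trunc J F).eval x) - (1 - (PowerSeries.trunc J 1).eval x)| := by
        congr 1; ring
    _ ≤ _ := (abs_sub _ _).trans (add_le_add h1 h2)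

lemma ApproxS.fpow (J k : ℕ) : ApproxS J ((F - 1) ^ k) (fun x => (PhiS x - 1) ^ k) := by
  induction k with
  | zero => simpa using ApproxS.one J
  | succ k ih => simpa only [pow_succ] using ih.mul (ApproxS.f J)

lemma f_le (x : ℝ) (hx : |x| ≤ 1 / 5) : |PhiS x - 1| ≤ 5 / 2 * |x| := by
  have := PhiS_approx 1 x hx
  simpa [F] using this

lemma decay (b : ℕ) : ∃ C, 0 ≤ C ∧ ∀ y : ℝ,
    |y| ^ b * Real.exp (-(|y| / 22)) ≤ C * (1 + |y|) ^ (-2 : ℝ) := by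
  refine ⟨22 ^ (b + 2) * (b + 2).factorial * Real.exp (1 / 22), by positivity, fun y => ?_⟩
  have h := Real.pow_div_factorial_le_exp ((1 + |y|) / 22) (by positivity) (b + 2)
  have hy : 0 < 1 + |y| := by positivity
  rw [Real.rpow_neg hy.le, ← div_eq_mul_inv, le_div_iff₀ (by positivity)]
  rw [div_pow, div_div, div_le_iff₀ (by positivity)] at h
  rw [show (1 + |y|) / 22 = 1 / 22 + |y| / 22 by ring, Real.exp_add] at h
  rw [Real.exp_neg]
  have h2 : (1 + |y|) ^ (2 : ℝ) = (1 + |y|) ^ 2 := by norm_cast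
  rw [h2]
  have h3 : |y| ^ b ≤ (1 + |y|) ^ b := by gcongr; linarith
  calc |y| ^ b * (Real.exp (|y| / 22))⁻¹ * (1 + |y|) ^ 2
      ≤ (1 + |y|) ^ b * (Real.exp (|y| / 22))⁻¹ * (1 + |y|) ^ 2 := by gcongr
    _ = (1 + |y|) ^ (b + 2) * (Real.exp (|y| / 22))⁻¹ := by ring
    _ ≤ (Real.exp (1 / 22) * Real.exp (|y| / 22) * (22 ^ (b + 2) * (b + 2).factorial)) *
        (Real.exp (|y| / 22))⁻¹ := by gcongr
    _ = _ := by field_simp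

lemma decay2 (b : ℕ) : ∃ C, 0 ≤ C ∧ ∀ y : ℝ,
    |y| ^ b * Real.exp (-(y ^ 2 / 4)) ≤ C * (1 + |y|) ^ (-2 : ℝ) := by
  obtain ⟨C, h0, hC⟩ := decay b
  refine ⟨Real.exp 1 * C, by positivity, fun y => ?_⟩
  have : Real.exp (-(y ^ 2 / 4)) ≤ Real.exp 1 * Real.exp (-(|y| / 22)) := by
    rw [← Real.exp_add, Real.exp_le_exp, ← sq_abs]
    nlinarith [sq_nonneg (|y| - 1)]
  calc _ ≤ |y| ^ b * (Real.exp 1 * Real.exp (-(|y| / 22))) := by gcongr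
    _ = Real.exp 1 * (|y| ^ b * Real.exp (-(|y| / 22))) := by ring
    _ ≤ Real.exp 1 * (C * (1 + |y|) ^ (-2 : ℝ)) := by exact mul_le_mul_of_nonneg_left (hC y) (by positivity)
    _ = _ := by ring

lemma phi_lower (x : ℝ) (hx : -1 < x) (hx5 : 1 / 5 ≤ |x|) : |x| / 22 ≤ x - Real.log (1 + x) := by
  have hp : 0 < 1 + x := by linarith
  set r := Real.sqrt (1 + x) with hr
  have hr0 : 0 < r := Real.sqrt_pos.mpr hp
  have hr2 : r ^ 2 = 1 + x := Real.sq_sqrt hp.le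
  have hl : Real.log (1 + x) ≤ 2 * (r - 1) := by
    rw [← hr2, Real.log_pow]
    have := Real.log_le_sub_one_of_pos hr0
    push_cast; linarith
  have hxr : x = r ^ 2 - 1 := by linarith
  have h1 : (r - 1) ^ 2 ≤ x - Real.log (1 + x) := by nlinarith
  refine le_trans ?_ h1
  have h2 : x ^ 2 = (r - 1) ^ 2 * (r + 1) ^ 2 := by rw [hxr]; ring
  have h3 : (r + 1) ^ 2 ≤ 22 * |x| := by
    have := le_abs_self x
    nlinarith [sq_nonneg (r - 1)]
  have h4 : |x| * |x| ≤ (r - 1) ^ 2 * (22 * |x|) := by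
    rw [abs_mul_abs_self, ← sq, h2]; gcongr
  have h5 : 0 < |x| := by linarith
  nlinarith

lemma M_int (b : ℕ) : Integrable (fun y : ℝ => y ^ b * Real.exp (-(y ^ 2 / 2))) := by
  have h := integrable_rpow_mul_exp_neg_mul_sq (b := 1 / 2) (by norm_num) (s := b)
    (by have : (0:ℝ) ≤ b := by positivity
        linarith)
  refine h.congr (Eventually.of_forall fun y => ?_)
  simp only [Real.rpow_natCast]
  congr 2; ring

lemma M_odd (m : ℕ) : ∫ y : ℝ, y ^ (2 * m + 1) * Real.exp (-(y ^ 2 / 2)) = 0 := by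
  have h := integral_neg_eq_self (fun y : ℝ => y ^ (2 * m + 1) * Real.exp (-(y ^ 2 / 2))) volume
  simp only [Odd.neg_pow ⟨m, rfl⟩, neg_sq, neg_mul, integral_neg] at h
  linarith

lemma M_even (m : ℕ) : ∫ y : ℝ, y ^ (2 * m) * Real.exp (-(y ^ 2 / 2)) =
    2 ^ ((m : ℝ) + 1 / 2) * Real.Gamma (m + 1 / 2) := by
  have h := integral_comp_abs (f := fun y : ℝ => y ^ (2 * m) * Real.exp (-(y ^ 2 / 2)))
  simp only [pow_mul, sq_abs] at h
  simp only [pow_mul]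
  rw [h]
  have h2 := integral_rpow_mul_exp_neg_mul_rpow (p := 2) (q := 2 * m) (b := 1 / 2) (by norm_num)
    (by have : (0:ℝ) ≤ m := by positivity
        linarith) (by norm_num)
  have h3 : ∫ x in Set.Ioi (0:ℝ), (x ^ 2) ^ m * Real.exp (-(x ^ 2 / 2)) =
      ∫ x in Set.Ioi (0:ℝ), x ^ (2 * (m : ℝ)) * Real.exp (-(1 / 2) * x ^ (2 : ℝ)) := by
    apply setIntegral_congr_fun measurableSet_Ioi
    intro x hx
    have e1 : x ^ (2 * (m : ℝ)) = (x ^ 2) ^ m := by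
      rw [← pow_mul]; exact_mod_cast Real.rpow_natCast x (2 * m)
    have e2 : x ^ (2 : ℝ) = x ^ 2 := by norm_cast
    simp only [e1, e2]
    congr 2; ring
  rw [h3, h2]
  have e3 : (2 * (m : ℝ) + 1) / 2 = m + 1 / 2 := by ring
  rw [neg_div, e3, one_div (2 : ℝ), Real.inv_rpow (by norm_num), ← Real.rpow_neg (by norm_num), neg_neg]
  ring

noncomputable def MS (m : ℕ) : ℝ := ∫ y : ℝ, y ^ (2 * m) * Real.exp (-(y ^ 2 / 2))

lemma MS_zero : MS 0 = Real.sqrt (2 * Real.pi) := by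
  rw [MS, M_even]
  simp only [Nat.cast_zero, zero_add]
  rw [Real.Gamma_one_half_eq, Real.sqrt_mul (by norm_num), Real.sqrt_eq_rpow 2]

lemma MS_succ (m : ℕ) : MS (m + 1) = (2 * m + 1) * MS m := by
  rw [MS, M_even, MS, M_even]
  push_cast
  rw [show (m : ℝ) + 1 + 1 / 2 = (m + 1 / 2) + 1 by ring, Real.Gamma_add_one (by positivity),
    Real.rpow_add_one (by norm_num)]
  ring

lemma MS_add (m k : ℕ) : MS (m + k) = MS m * ∏ i ∈ Finset.range k, (2 * (m : ℝ) + 2 * i + 1) := by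
  induction k with
  | zero => simp
  | succ k ih => rw [← add_assoc, MS_succ, ih, Finset.prod_range_succ]; push_cast; ring

lemma MS_fact (m : ℕ) : MS m = Real.sqrt (2 * Real.pi) *
    ((Nat.factorial (2 * m) : ℝ) / (2 ^ m * (Nat.factorial m : ℝ))) := by
  induction m with
  | zero => simp [MS_zero]
  | succ m ih =>
    rw [MS_succ, ih, show 2 * (m + 1) = 2 * m + 1 + 1 by ring]
    simp only [Nat.factorial_succ]
    push_cast
    field_simp
    ring

lemma gbinom_eq (n k : ℕ) : gbinomR (-((n : ℝ) + 1 / 2)) k * MS n =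
    (-(1 / 2)) ^ k / (Nat.factorial k : ℝ) * MS (n + k) := by
  rw [MS_add, gbinomR]
  have : ∏ i ∈ Finset.range k, (-((n : ℝ) + 1 / 2) - i) =
      (-(1 / 2)) ^ k * ∏ i ∈ Finset.range k, (2 * (n : ℝ) + 2 * i + 1) := by
    rw [← Finset.card_range k, ← Finset.prod_const, Finset.card_range, ← Finset.prod_mul_distrib]
    apply Finset.prod_congr rfl
    intro i _; ring
  rw [this]; ring

lemma coeff_zero_of_lt (k j : ℕ) (h : j < k) : PowerSeries.coeff j ((F - 1) ^ k) = 0 := by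
  have : PowerSeries.X ∣ (F - 1) := by
    rw [PowerSeries.X_dvd_iff]; simp [F]
  exact PowerSeries.X_pow_dvd_iff.mp (pow_dvd_pow_of_dvd this k) j h

lemma gamma_formula (n K : ℕ) (hK : 2 * n < K) :
    Real.sqrt (2 * Real.pi) * ((-1) ^ n * stirlingCoeff n) =
    ∑ k ∈ Finset.range K, (-(1 / 2)) ^ k / (Nat.factorial k : ℝ) *
      PowerSeries.coeff (2 * n) ((F - 1) ^ k) * MS (n + k) := by
  rw [← Finset.sum_subset (Finset.range_subset_range.mpr (show 2 * n + 1 ≤ K by omega))]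
  · have : Real.sqrt (2 * Real.pi) * ((-1) ^ n * stirlingCoeff n) =
      MS n * PowerSeries.coeff (2 * n) (Fpow (-((n : ℝ) + 1 / 2))) := by
      rw [MS_fact, stirlingCoeff]
      have : ((-1 : ℝ) ^ n) * (-1) ^ n = 1 := by rw [← mul_pow]; simp
      linear_combination (Real.sqrt (2 * Real.pi) * ((Nat.factorial (2 * n) : ℝ) / (2 ^ n * (Nat.factorial n : ℝ))) * PowerSeries.coeff (2 * n) (Fpow (-((n : ℝ) + 1 / 2)))) * this
    rw [this, Fpow, PowerSeries.coeff_mk, Finset.mul_sum]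
    apply Finset.sum_congr rfl
    intro k _
    linear_combination PowerSeries.coeff (2 * n) ((F - 1) ^ k) * gbinom_eq n k
  · intro k _ hk
    rw [coeff_zero_of_lt]
    · ring
    · simp at hk; omega

lemma st0 : stirlingCoeff 0 = 1 := by
  simp [stirlingCoeff, Fpow, gbinomR]

lemma st1 : stirlingCoeff 1 = -(1 / 12) := by
  simp [stirlingCoeff, Fpow, gbinomR, Finset.sum_range_succ, Finset.prod_range_succ, pow_succ,
    PowerSeries.coeff_mul, Finset.Nat.antidiagonal_succ, F, PowerSeries.coeff_one, Nat.factorial]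
  norm_num

lemma st2 : stirlingCoeff 2 = 1 / 288 := by
  simp [stirlingCoeff, Fpow, gbinomR, Finset.sum_range_succ, Finset.prod_range_succ, pow_succ,
    PowerSeries.coeff_mul, Finset.Nat.antidiagonal_succ, F, PowerSeries.coeff_one, Nat.factorial]
  norm_num

noncomputable def ES (s y : ℝ) : ℝ :=
  if 0 < 1 + s * y then Real.exp (-((s * y - Real.log (1 + s * y)) / s ^ 2)) else 0

noncomputable def SS (N : ℕ) (s y : ℝ) : ℝ :=
  ∑ k ∈ Finset.range (2 * N), (-(y ^ 2 / 2)) ^ k / (Nat.factorial k : ℝ) *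
    (PowerSeries.trunc (2 * N) ((F - 1) ^ k)).eval (s * y)

lemma far_poly (J : ℕ) (G : PowerSeries ℝ) : ∃ C, 0 ≤ C ∧ ∀ x : ℝ, 1 / 5 ≤ |x| →
    |(PowerSeries.trunc J G).eval x| ≤ C * |x| ^ J := by
  refine ⟨∑ i ∈ Finset.range J, |PowerSeries.coeff i G| * 5 ^ (J - i),
    Finset.sum_nonneg fun i _ => by positivity, fun x hx => ?_⟩
  rw [eval_trunc_S, Finset.sum_mul]
  refine (Finset.abs_sum_le_sum_abs _ _).trans (Finset.sum_le_sum fun i hi => ?_)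
  have hi : i < J := Finset.mem_range.mp hi
  rw [abs_mul, abs_pow, mul_assoc]
  have h1 : (1 : ℝ) ≤ (5 * |x|) ^ (J - i) := one_le_pow₀ (by linarith)
  have h2 : |x| ^ J = |x| ^ i * |x| ^ (J - i) := by rw [← pow_add]; congr 1; omega
  have h3 : (5 : ℝ) ^ (J - i) * |x| ^ J = |x| ^ i * (5 * |x|) ^ (J - i) := by
    rw [h2, mul_pow]; ring
  rw [h3]
  have : |x| ^ i * 1 ≤ |x| ^ i * (5 * |x|) ^ (J - i) := by gcongr
  rw [mul_one] at this
  gcongr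

/-- common estimate of one term of the double sum -/
lemma term_bound (J k : ℕ) (c : ℝ) : ∃ C, 0 ≤ C ∧ ∀ s : ℝ, 0 < s → ∀ y t : ℝ,
    |t| ≤ c * |s * y| ^ J →
    Real.exp (-(y ^ 2 / 2)) * |(-(y ^ 2 / 2)) ^ k / (Nat.factorial k : ℝ) * t| ≤
      C * s ^ J * (1 + |y|) ^ (-2 : ℝ) := by
  obtain ⟨D, hD0, hD⟩ := decay2 (2 * k + J)
  refine ⟨|c| * D, by positivity, fun s hs y t ht => ?_⟩
  have ht' : |t| ≤ |c| * (s ^ J * |y| ^ J) := by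
    refine ht.trans ?_
    rw [abs_mul, mul_pow, abs_of_pos hs]
    gcongr
    exact le_abs_self c
  have he : Real.exp (-(y ^ 2 / 2)) ≤ Real.exp (-(y ^ 2 / 4)) := by
    rw [Real.exp_le_exp]; nlinarith [sq_nonneg y]
  have hk : |(-(y ^ 2 / 2)) ^ k / (Nat.factorial k : ℝ)| ≤ |y| ^ (2 * k) := by
    rw [abs_div, abs_pow, abs_neg, abs_of_nonneg (by positivity : 0 ≤ y ^ 2 / 2), Nat.abs_cast,
      pow_mul, sq_abs]
    calc (y ^ 2 / 2) ^ k / (Nat.factorial k : ℝ) ≤ (y ^ 2 / 2) ^ k :=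
          div_le_self (by positivity) (by exact_mod_cast Nat.factorial_pos k)
      _ ≤ (y ^ 2) ^ k := by gcongr; nlinarith [sq_nonneg y]
  rw [abs_mul]
  calc _ ≤ Real.exp (-(y ^ 2 / 4)) * (|y| ^ (2 * k) * (|c| * (s ^ J * |y| ^ J))) := by gcongr
    _ = |c| * s ^ J * (|y| ^ (2 * k + J) * Real.exp (-(y ^ 2 / 4))) := by ring
    _ ≤ |c| * s ^ J * (D * (1 + |y|) ^ (-2 : ℝ)) :=
        mul_le_mul_of_nonneg_left (hD y) (by positivity)
    _ = _ := by ring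

lemma exp_taylor (w : ℝ) (n : ℕ) :
    |Real.exp w - ∑ k ∈ Finset.range n, w ^ k / (Nat.factorial k : ℝ)| ≤
      |w| ^ n * Real.exp |w| := by
  have := Complex.norm_exp_sub_sum_le_norm_mul_exp (w : ℂ) n
  rw [Complex.norm_real, Real.norm_eq_abs] at this
  rw [← Real.norm_eq_abs, ← Complex.norm_real]
  push_cast
  exact this

lemma near_bound (N : ℕ) : ∃ C, 0 ≤ C ∧ ∀ s : ℝ, 0 < s → ∀ y : ℝ, |s * y| ≤ 1 / 5 →
    |ES s y - Real.exp (-(y ^ 2 / 2)) * SS N s y| ≤ C * s ^ (2 * N) * (1 + |y|) ^ (-2 : ℝ) := by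
  obtain ⟨D, hD0, hD⟩ := decay2 (6 * N)
  have hA := fun k => ApproxS.fpow (2 * N) k
  choose c hc using hA
  choose B hB0 hB using fun k => term_bound (2 * N) k (c k)
  refine ⟨(5 / 4) ^ (2 * N) * D + ∑ k ∈ Finset.range (2 * N), B k,
    add_nonneg (by positivity) (Finset.sum_nonneg fun k _ => hB0 k), fun s hs y hx => ?_⟩
  set x := s * y with hxdef
  set w := -(y ^ 2 / 2) * (PhiS x - 1) with hw
  have hE : ES s y = Real.exp (-(y ^ 2 / 2)) * Real.exp w := by
    have : 0 < 1 + x := by linarith [(abs_le.mp hx).1]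
    rw [ES, if_pos this, ← Real.exp_add, ← hxdef, ← PhiS_mul, hw]
    congr 1
    rw [hxdef]
    field_simp
    ring
  have hf := f_le x hx
  have hwa : |w| = y ^ 2 / 2 * |PhiS x - 1| := by
    rw [hw, abs_mul, abs_neg, abs_of_nonneg (by positivity : 0 ≤ y ^ 2 / 2)]
  have hw1 : |w| ≤ y ^ 2 / 4 := by
    rw [hwa]; nlinarith [sq_nonneg y]
  have hw2 : |w| ≤ 5 / 4 * (s * |y| ^ 3) := by
    have hxa : |x| = s * |y| := by rw [hxdef, abs_mul, abs_of_pos hs]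
    calc |w| ≤ y ^ 2 / 2 * (5 / 2 * |x|) := by rw [hwa]; gcongr
      _ = _ := by rw [hxa, ← sq_abs]; ring
  have hT := exp_taylor w (2 * N)
  have e0 : 0 < Real.exp (-(y ^ 2 / 2)) := Real.exp_pos _
  have key : ES s y - Real.exp (-(y ^ 2 / 2)) * SS N s y =
      Real.exp (-(y ^ 2 / 2)) *
        (Real.exp w - ∑ k ∈ Finset.range (2 * N), w ^ k / (Nat.factorial k : ℝ)) +
      ∑ k ∈ Finset.range (2 * N), Real.exp (-(y ^ 2 / 2)) *
        ((-(y ^ 2 / 2)) ^ k / (Nat.factorial k : ℝ) *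
          ((PhiS x - 1) ^ k - (PowerSeries.trunc (2 * N) ((F - 1) ^ k)).eval x)) := by
    rw [hE, SS, ← Finset.mul_sum, mul_sub, sub_add, ← mul_sub, ← mul_sub, ← mul_sub,
      ← Finset.sum_sub_distrib]
    congr 2
    apply Finset.sum_congr rfl
    intro k _
    rw [hw, mul_pow]; ring
  rw [key, add_mul, add_mul]
  refine (abs_add_le _ _).trans (add_le_add ?_ ?_)
  · rw [abs_mul, abs_of_pos e0]
    calc _ ≤ Real.exp (-(y ^ 2 / 2)) * ((5 / 4 * (s * |y| ^ 3)) ^ (2 * N) * Real.exp (y ^ 2 / 4)) := by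
          refine mul_le_mul_of_nonneg_left (hT.trans ?_) e0.le
          gcongr
      _ = (5 / 4) ^ (2 * N) * s ^ (2 * N) * (|y| ^ (6 * N) *
            (Real.exp (-(y ^ 2 / 2)) * Real.exp (y ^ 2 / 4))) := by
          rw [mul_pow, mul_pow, ← pow_mul, show 3 * (2 * N) = 6 * N by ring]; ring
      _ = (5 / 4) ^ (2 * N) * s ^ (2 * N) * (|y| ^ (6 * N) * Real.exp (-(y ^ 2 / 4))) := by
          rw [← Real.exp_add]; congr 3; ring
      _ ≤ (5 / 4) ^ (2 * N) * s ^ (2 * N) * (D * (1 + |y|) ^ (-2 : ℝ)) :=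
          mul_le_mul_of_nonneg_left (hD y) (by positivity)
      _ = _ := by ring
  · rw [Finset.sum_mul, Finset.sum_mul]
    refine (Finset.abs_sum_le_sum_abs _ _).trans (Finset.sum_le_sum fun k _ => ?_)
    rw [abs_mul, abs_of_pos e0]
    exact hB k s hs y _ (hc k x hx)

lemma far_bound (N : ℕ) : ∃ C, 0 ≤ C ∧ ∀ s : ℝ, 0 < s → s ≤ 1 → ∀ y : ℝ, 1 / 5 ≤ |s * y| →
    |ES s y - Real.exp (-(y ^ 2 / 2)) * SS N s y| ≤ C * s ^ (2 * N) * (1 + |y|) ^ (-2 : ℝ) := by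
  obtain ⟨D, hD0, hD⟩ := decay (2 * N)
  choose c hc0 hc using fun k => far_poly (2 * N) ((F - 1) ^ k)
  choose B hB0 hB using fun k => term_bound (2 * N) k (c k)
  refine ⟨5 ^ (2 * N) * D + ∑ k ∈ Finset.range (2 * N), B k,
    add_nonneg (by positivity) (Finset.sum_nonneg fun k _ => hB0 k), fun s hs hs1 y hx => ?_⟩
  have e0 : 0 < Real.exp (-(y ^ 2 / 2)) := Real.exp_pos _
  have hxa : |s * y| = s * |y| := by rw [abs_mul, abs_of_pos hs]
  have hE : |ES s y| ≤ Real.exp (-(|y| / 22)) := by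
    rw [ES]
    split_ifs with h
    · rw [abs_of_pos (Real.exp_pos _), Real.exp_le_exp, neg_le_neg_iff, le_div_iff₀ (by positivity)]
      refine le_trans ?_ (phi_lower (s * y) (by linarith) hx)
      rw [hxa]
      have : s ^ 2 ≤ s := by nlinarith
      nlinarith [mul_le_mul_of_nonneg_left this (abs_nonneg y)]
    · simp [Real.exp_nonneg]
  rw [add_mul, add_mul]
  refine (abs_sub _ _).trans (add_le_add ?_ ?_)
  · have h1 : (1 : ℝ) ≤ (5 * (s * |y|)) ^ (2 * N) := one_le_pow₀ (by rw [← hxa]; linarith)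
    calc |ES s y| ≤ Real.exp (-(|y| / 22)) := hE
      _ ≤ (5 * (s * |y|)) ^ (2 * N) * Real.exp (-(|y| / 22)) :=
          le_mul_of_one_le_left (Real.exp_nonneg _) h1
      _ = 5 ^ (2 * N) * s ^ (2 * N) * (|y| ^ (2 * N) * Real.exp (-(|y| / 22))) := by
          rw [mul_pow, mul_pow]; ring
      _ ≤ 5 ^ (2 * N) * s ^ (2 * N) * (D * (1 + |y|) ^ (-2 : ℝ)) :=
          mul_le_mul_of_nonneg_left (hD y) (by positivity)
      _ = _ := by ring
  · rw [SS, Finset.mul_sum, Finset.sum_mul, Finset.sum_mul]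
    refine (Finset.abs_sum_le_sum_abs _ _).trans (Finset.sum_le_sum fun k _ => ?_)
    rw [abs_mul, abs_of_pos e0]
    exact hB k s hs y _ (hc k _ hx)

lemma key_bound (N : ℕ) : ∃ C, 0 ≤ C ∧ ∀ s : ℝ, 0 < s → s ≤ 1 → ∀ y : ℝ,
    |ES s y - Real.exp (-(y ^ 2 / 2)) * SS N s y| ≤ C * s ^ (2 * N) * (1 + |y|) ^ (-2 : ℝ) := by
  obtain ⟨C, hC0, hC⟩ := near_bound N
  obtain ⟨D, hD0, hD⟩ := far_bound N
  refine ⟨C + D, by positivity, fun s hs hs1 y => ?_⟩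
  have p : 0 ≤ s ^ (2 * N) * (1 + |y|) ^ (-2 : ℝ) := by positivity
  rcases le_total |s * y| (1 / 5) with h | h
  · have := hC s hs y h; nlinarith
  · have := hD s hs hs1 y h; nlinarith

lemma SS_expand (N : ℕ) (s y : ℝ) : Real.exp (-(y ^ 2 / 2)) * SS N s y =
    ∑ k ∈ Finset.range (2 * N), ∑ j ∈ Finset.range (2 * N),
      ((-(1 / 2)) ^ k / (Nat.factorial k : ℝ) * PowerSeries.coeff j ((F - 1) ^ k) * s ^ j) *
        (y ^ (2 * k + j) * Real.exp (-(y ^ 2 / 2))) := by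
  rw [SS, Finset.mul_sum]
  apply Finset.sum_congr rfl
  intro k _
  rw [eval_trunc_S, Finset.mul_sum, Finset.mul_sum]
  apply Finset.sum_congr rfl
  intro j _
  rw [show -(y ^ 2 / 2) = -(1 / 2) * y ^ 2 by ring, mul_pow, mul_pow, pow_add, pow_mul]
  ring

lemma SS_integrable (N : ℕ) (s : ℝ) :
    Integrable (fun y : ℝ => Real.exp (-(y ^ 2 / 2)) * SS N s y) := by
  simp only [SS_expand]
  exact integrable_finsetSum _ fun k _ => integrable_finsetSum _ fun j _ =>
    (M_int (2 * k + j)).const_mul _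

lemma sum_range_two_mul (N : ℕ) (g : ℕ → ℝ) : ∑ j ∈ Finset.range (2 * N), g j =
    ∑ n ∈ Finset.range N, (g (2 * n) + g (2 * n + 1)) := by
  induction N with
  | zero => simp
  | succ N ih =>
    rw [show 2 * (N + 1) = 2 * N + 1 + 1 by ring, Finset.sum_range_succ, Finset.sum_range_succ, ih,
      Finset.sum_range_succ]
    ring

lemma SS_integral (N : ℕ) (s : ℝ) :
    ∫ y : ℝ, Real.exp (-(y ^ 2 / 2)) * SS N s y =
      Real.sqrt (2 * Real.pi) * ∑ n ∈ Finset.range N, (-1) ^ n * stirlingCoeff n * s ^ (2 * n) := by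
  simp only [SS_expand]
  rw [integral_finsetSum _ fun k _ => integrable_finsetSum _ fun j _ =>
    (M_int (2 * k + j)).const_mul _]
  have h1 : ∀ k ∈ Finset.range (2 * N), ∫ y : ℝ, ∑ j ∈ Finset.range (2 * N),
      ((-(1 / 2)) ^ k / (Nat.factorial k : ℝ) * PowerSeries.coeff j ((F - 1) ^ k) * s ^ j) *
        (y ^ (2 * k + j) * Real.exp (-(y ^ 2 / 2))) =
      ∑ n ∈ Finset.range N, ((-(1 / 2)) ^ k / (Nat.factorial k : ℝ) *
        PowerSeries.coeff (2 * n) ((F - 1) ^ k) * s ^ (2 * n)) * MS (n + k) := by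
    intro k _
    rw [integral_finsetSum _ fun j _ => (M_int (2 * k + j)).const_mul _]
    simp only [integral_const_mul]
    rw [sum_range_two_mul]
    apply Finset.sum_congr rfl
    intro n _
    rw [← add_assoc, ← mul_add, M_odd, mul_zero, add_zero, MS, add_comm n k]
  rw [Finset.sum_congr rfl h1, Finset.sum_comm, Finset.mul_sum]
  apply Finset.sum_congr rfl
  intro n hn
  have hn := Finset.mem_range.mp hn
  rw [← mul_assoc, gamma_formula n (2 * N) (by omega), Finset.sum_mul]
  apply Finset.sum_congr rfl
  intro k _
  ring

lemma ES_gamma (l : ℝ) (hl : 0 < l) :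
    Integrable (fun y => ES ((Real.sqrt l)⁻¹) y) ∧
    Real.Gamma l = l ^ (l - 1 / 2) * Real.exp (-l) * ∫ y, ES ((Real.sqrt l)⁻¹) y := by
  have hr : 0 < Real.sqrt l := Real.sqrt_pos.mpr hl
  have hr2 : Real.sqrt l ^ 2 = l := Real.sq_sqrt hl.le
  set r := Real.sqrt l with hrdef
  set g : ℝ → ℝ := Set.indicator (Set.Ioi 0) (fun t => Real.exp (-t) * t ^ l) with hg
  have hc : 0 < l ^ l * Real.exp (-l) := by positivity
  have hgi : Integrable g := by
    rw [hg, integrable_indicator_iff measurableSet_Ioi]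
    have := Real.GammaIntegral_convergent (s := l + 1) (by linarith)
    simpa using this
  have hG : Real.Gamma (l + 1) = ∫ t, g t := by
    rw [Real.Gamma_eq_integral (by linarith), hg, integral_indicator measurableSet_Ioi]
    simp
  have hE : ∀ y, g (l + r * y) = l ^ l * Real.exp (-l) * ES r⁻¹ y := by
    intro y
    have e1 : l + r * y = l * (1 + r⁻¹ * y) := by
      rw [← hr2]; field_simp
    rw [hg, ES, e1, Set.indicator_apply]
    by_cases h : 0 < 1 + r⁻¹ * y
    · rw [if_pos (by exact mul_pos hl h), if_pos h, Real.mul_rpow hl.le h.le,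
        Real.rpow_def_of_pos h, inv_pow, hr2]
      rw [show Real.exp (-(l * (1 + r⁻¹ * y))) * (l ^ l * Real.exp (Real.log (1 + r⁻¹ * y) * l))
        = l ^ l * (Real.exp (-(l * (1 + r⁻¹ * y))) * Real.exp (Real.log (1 + r⁻¹ * y) * l)) by ring,
        mul_assoc, ← Real.exp_add, ← Real.exp_add]
      congr 2
      field_simp
      ring
    · rw [if_neg h, mul_zero, if_neg]
      intro h2
      exact h (pos_of_mul_pos_right h2 hl.le)
  have hcomp : Integrable (fun y => g (l + r * y)) := (hgi.comp_add_left l).comp_mul_left' hr.ne'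
  simp only [hE] at hcomp
  have hI : Integrable (fun y => ES r⁻¹ y) := by
    have := hcomp.const_mul (l ^ l * Real.exp (-l))⁻¹
    refine this.congr (Eventually.of_forall fun y => ?_)
    field_simp
  refine ⟨hI, ?_⟩
  have h1 := Measure.integral_comp_mul_left (fun t => g (l + t)) r
  rw [integral_add_left_eq_self g l, ← hG, Real.Gamma_add_one hl.ne'] at h1
  simp only [hE, integral_const_mul, smul_eq_mul, abs_of_pos (inv_pos.mpr hr)] at h1
  have h2 : l ^ (l - 1 / 2) = l ^ l / r := by
    rw [Real.rpow_sub hl, hrdef, Real.sqrt_eq_rpow]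
  rw [h2]
  have h3 : r⁻¹ * (l * Real.Gamma l) = r * Real.Gamma l := by
    rw [← hr2]; field_simp
  rw [h3] at h1
  rw [div_mul_eq_mul_div, div_mul_eq_mul_div, h1, mul_div_cancel_left₀ _ hr.ne']

lemma main_bound (N : ℕ) : ∃ C, 0 ≤ C ∧ ∀ l : ℝ, 1 ≤ l →
    |Real.Gamma l - Real.sqrt (2 * Real.pi) * l ^ (l - 1 / 2) * Real.exp (-l) *
            ∑ n ∈ Finset.range N, (-1 : ℝ) ^ n * stirlingCoeff n / l ^ n| ≤
      C * (l ^ (l - 1 / 2) * Real.exp (-l) * l ^ (-(N : ℝ))) := by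
  obtain ⟨C, hC0, hC⟩ := key_bound N
  have hint : Integrable (fun y : ℝ => (1 + |y|) ^ (-2 : ℝ)) := by
    have := integrable_one_add_norm (E := ℝ) (μ := volume) (r := 2) (by simp)
    simpa using this
  refine ⟨C * ∫ y : ℝ, (1 + |y|) ^ (-2 : ℝ),
    mul_nonneg hC0 (integral_nonneg fun y => by positivity), fun l hl => ?_⟩
  have hl0 : 0 < l := by linarith
  obtain ⟨hI, hG⟩ := ES_gamma l hl0
  have hr1 : 1 ≤ Real.sqrt l := Real.one_le_sqrt.mpr hl
  set s := (Real.sqrt l)⁻¹ with hs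
  have hs0 : 0 < s := by positivity
  have hs1 : s ≤ 1 := inv_le_one_of_one_le₀ hr1
  have hs2 : ∀ n : ℕ, s ^ (2 * n) = (l ^ n)⁻¹ := by
    intro n
    rw [pow_mul, hs, inv_pow, Real.sq_sqrt hl0.le, inv_pow]
  have hS := SS_integral N s
  have hsum : ∑ n ∈ Finset.range N, (-1 : ℝ) ^ n * stirlingCoeff n / l ^ n =
      ∑ n ∈ Finset.range N, (-1) ^ n * stirlingCoeff n * s ^ (2 * n) := by
    apply Finset.sum_congr rfl
    intro n _
    rw [hs2, div_eq_mul_inv]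
  have hA : 0 < l ^ (l - 1 / 2) * Real.exp (-l) := by positivity
  have heq : Real.Gamma l - Real.sqrt (2 * Real.pi) * l ^ (l - 1 / 2) * Real.exp (-l) *
            ∑ n ∈ Finset.range N, (-1 : ℝ) ^ n * stirlingCoeff n / l ^ n =
      l ^ (l - 1 / 2) * Real.exp (-l) *
        ∫ y, (ES s y - Real.exp (-(y ^ 2 / 2)) * SS N s y) := by
    rw [integral_sub hI (SS_integrable N s), hS, hG, hsum]
    ring
  have hb : |∫ y, (ES s y - Real.exp (-(y ^ 2 / 2)) * SS N s y)| ≤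
      C * s ^ (2 * N) * ∫ y : ℝ, (1 + |y|) ^ (-2 : ℝ) := by
    rw [← integral_const_mul, ← Real.norm_eq_abs]
    exact norm_integral_le_of_norm_le (hint.const_mul _)
      (Eventually.of_forall fun y => hC s hs0 hs1 y)
  rw [heq, abs_mul, abs_of_pos hA, Real.rpow_neg hl0.le, Real.rpow_natCast, ← hs2]
  calc _ ≤ l ^ (l - 1 / 2) * Real.exp (-l) * (C * s ^ (2 * N) * ∫ y : ℝ, (1 + |y|) ^ (-2 : ℝ)) :=
        mul_le_mul_of_nonneg_left hb hA.le
    _ = _ := by ring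

end StirlingAux

/-- Stirling's asymptotic expansion of the gamma function: for every `N`, as `λ → +∞`,
`Γ(λ) = √(2π) λ^{λ-1/2} e^{-λ} (∑_{n=0}^{N-1} (-1)^n γ_n λ^{-n} + O(λ^{-N}))`, where
`γ_n` are the Stirling coefficients; in particular `γ₀ = 1`, `γ₁ = -1/12`, `γ₂ = 1/288`. -/
theorem gamma_stirling_expansion (N : ℕ) :
    ((fun l : ℝ =>
        Real.Gamma l -
          Real.sqrt (2 * Real.pi) * l ^ (l - 1 / 2) * Real.exp (-l) *
            ∑ n ∈ Finset.range N, (-1 : ℝ) ^ n * stirlingCoeff n / l ^ n)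
      =O[atTop] fun l : ℝ =>
        Real.sqrt (2 * Real.pi) * l ^ (l - 1 / 2) * Real.exp (-l) * l ^ (-(N : ℝ))) ∧
    stirlingCoeff 0 = 1 ∧ stirlingCoeff 1 = -(1 / 12) ∧ stirlingCoeff 2 = 1 / 288 := by
  refine ⟨?_, st0, st1, st2⟩
  obtain ⟨C, hC0, hC⟩ := main_bound N
  have hp : 0 < Real.sqrt (2 * Real.pi) := Real.sqrt_pos.mpr (by positivity)
  refine IsBigO.of_bound (C / Real.sqrt (2 * Real.pi)) ?_
  filter_upwards [eventually_ge_atTop 1] with l hl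
  have hl0 : 0 < l := by linarith
  have h := hC l hl
  rw [Real.norm_eq_abs, Real.norm_eq_abs]
  refine h.trans (le_of_eq ?_)
  rw [abs_of_pos (by positivity)]
  field_simp
end
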